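/- Let K ⊆ ℝ² be a compact convex set with nonempty interior whose boundary ∂K is a C² curve of strictly positive curvature, let T be its outer billiard map on Ω := ℝ² ∖ K, fix the origin 0 in the interior of K, and let S be the generating function. Assume every T-orbit is locally minimizing. For x ∈ Ω let φ₀(x) be a polar angle of x and φ₁(x) a polar angle of T(x), chosen with φ₀(x) < φ₁(x) < φ₀(x) + π. Let A : Ω → (0,∞) be continuous and set B := A ∘ T. If the integral I := ∫_Ω [ A(x)² S₁₁(φ₀(x), φ₁(x)) + 2 A(x) B(x) S₁₂(φ₀(x), φ₁(x)) + B(x)² S₂₂(φ₀(x), φ₁(x)) ] dx (with respect to two-dimensional Lebesgue measure) converges absolutely, then I ≥ 0, where S₁₁, S₁₂, S₂₂ denote the second partial derivatives of S with respect to its first and second arguments. -/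

import Mathlib

/-! Let `q = A² S₁₁ + 2 A (A ∘ T) S₁₂ + (A ∘ T)² S₂₂` be the integrand. Vary the angles of the orbit
`x, T x, …, T^N x` in the direction `A x, A (T x), …, A (T^N x)`, keeping all other angles fixed. Local
minimality makes the second variation nonnegative, which reads
`-p' x ≤ q x + q (T x) + … + q (T^(N-1) x) + p (T^N x)` with `p = A² S₁₁` and `p' x` the product of
`A x ^ 2` and `S₂₂` at the preimage of `x` (`second_variation_nonneg`, applied to the orbits of
`exists_orbit`). The infimum `h` over `N` of the right-hand side without `-p'` is finite and satisfies
`h ≤ q + h ∘ T`. If `h` were integrable, invariance of area would give `0 ≤ ∫ q` at once. In general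
`h` is truncated, and since the exterior of `K` has infinite area, truncation has to be combined with
cutoffs `χₙ ↑ 1` for which `∫ |χₙ ∘ T - χₙ| → 0` (`integral_nonneg_of_birkhoff_bound`).

Preservation of area comes from the tangent coordinates: if `m θ` is the boundary point with tangent
direction `u θ`, every exterior point is uniquely `x = m θ - l u θ` with `l > 0`, and
`T x = m θ + l u θ`; both expressions have Jacobian `l` (`TangentParam.measurePreserving_extT`).

The cutoffs are functions of `g / n`, where `g = l W(θ) + c(θ) / (1 + l)`, `W` is the width of `K`
transversally to `u θ` and `c(θ) = W(θ)² (ρ(θ) - ρ(θ + π)) / 4` with `ρ` the radius of curvature. Far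
away `T²` nearly follows the level sets of `l W`, and the correction `c` improves the error to
`g (T x) - g x = o(1 / l)` (`TangentParam.almostInv_T`). Hence `χₙ ∘ T - χₙ` is `o(1 / n²)` and is
supported in a region of area `O(n²)` (`TangentParam.exists_cutoff`).

The angles `φ₀`, `φ₁` are arbitrary functions, possibly not measurable. The second derivatives of `S`
do not change when a multiple of `2π` is added to both angles (`genFun_second_periodic`), because the
area of a triangle cut off by a bisected tangent segment depends on the two rays only
(`SegData.detV_eq`). This makes `p` measurable (`aemeasurable_S11`) and identifies the second
derivatives along a lifted orbit with those at the given angles.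
-/

open Real MeasureTheory Set

noncomputable section

/-- Determinant of two plane vectors. -/
def detV (u v : ℝ × ℝ) : ℝ := u.1 * v.2 - u.2 * v.1

/-- The unit vector of polar angle `φ`. -/
def uVec (φ : ℝ) : ℝ × ℝ := (Real.cos φ, Real.sin φ)

/-- The boundary of `K` is a `C²` curve of strictly positive curvature, expressed through the
radial function `r` of `∂K` with respect to the interior point `O`. -/
def HasC2PosCurvBoundary (K : Set (ℝ × ℝ)) (O : ℝ × ℝ) (r : ℝ → ℝ) : Prop :=
  O ∈ interior K ∧ ContDiff ℝ 2 r ∧ (∀ φ, r (φ + 2 * π) = r φ) ∧ (∀ φ, 0 < r φ) ∧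
  (∀ φ, 0 < r φ ^ 2 + 2 * (deriv r φ) ^ 2 - r φ * deriv (deriv r) φ) ∧
  frontier K = {p | ∃ φ, p = O + r φ • uVec φ}

/-- `T` is the outer billiard map of `K`: for `A ∉ K`, the midpoint of `[A, T A]` lies on `∂K`,
the segment `[A, T A]` meets `K` exactly at this midpoint, and `K` lies to the left of the
oriented segment. -/
def IsOuterBilliard (K : Set (ℝ × ℝ)) (T : ℝ × ℝ → ℝ × ℝ) : Prop :=
  ∀ A, A ∉ K →
    T A ∉ K ∧
    (1 / 2 : ℝ) • (A + T A) ∈ frontier K ∧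
    segment ℝ A (T A) ∩ K = {(1 / 2 : ℝ) • (A + T A)} ∧
    ∀ k ∈ K, 0 ≤ detV (T A - A) (k - (1 / 2 : ℝ) • (A + T A))

/-- A set is an ellipse if it is the image of the unit circle under an invertible affine map. -/
def IsEllipse (C : Set (ℝ × ℝ)) : Prop :=
  ∃ (L : (ℝ × ℝ) →ₗ[ℝ] ℝ × ℝ) (c : ℝ × ℝ), Function.Bijective L ∧
    C = (fun x => c + L x) '' {x : ℝ × ℝ | x.1 ^ 2 + x.2 ^ 2 = 1}

/-- The polar dual of `C` with respect to `x`. -/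
def polarDual (C : Set (ℝ × ℝ)) (x : ℝ × ℝ) : Set (ℝ × ℝ) :=
  {y | ∀ c ∈ C, y.1 * (c.1 - x.1) + y.2 * (c.2 - x.2) ≤ 1}

/-- `x` is the Santalo point of `C`: the interior point minimizing the area of the polar dual. -/
def IsSantaloPoint (C : Set (ℝ × ℝ)) (x : ℝ × ℝ) : Prop :=
  x ∈ interior C ∧ ∀ y ∈ interior C, volume (polarDual C x) ≤ volume (polarDual C y)

/-- The data of a segment `[M₀, M₁]` with `Mᵢ` on the open ray of polar angle `φᵢ`,
tangent to `∂K` exactly at its midpoint. -/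
def SegData (K : Set (ℝ × ℝ)) (φ₀ φ₁ : ℝ) (M₀ M₁ : ℝ × ℝ) : Prop :=
  (∃ s > (0 : ℝ), M₀ = s • uVec φ₀) ∧ (∃ s > (0 : ℝ), M₁ = s • uVec φ₁) ∧
  (1 / 2 : ℝ) • (M₀ + M₁) ∈ frontier K ∧
  segment ℝ M₀ M₁ ∩ K = {(1 / 2 : ℝ) • (M₀ + M₁)}

/-- `S` is the generating function of the outer billiard of `K` (with respect to the origin `0`):
`S φ₀ φ₁` is the area of the triangle `0 M₀ M₁`. -/
def IsGenFun (K : Set (ℝ × ℝ)) (S : ℝ → ℝ → ℝ) : Prop :=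
  ∀ φ₀ φ₁ : ℝ, φ₀ < φ₁ → φ₁ < φ₀ + π →
    ∃ M₀ M₁, SegData K φ₀ φ₁ M₀ M₁ ∧ S φ₀ φ₁ = |detV M₀ M₁| / 2

/-- The angular configuration `φ : ℤ → ℝ` is locally minimizing for the generating function `S`. -/
def LocMinConfig (S : ℝ → ℝ → ℝ) (φ : ℤ → ℝ) : Prop :=
  ∀ M N : ℤ, M ≤ N →
    IsLocalMin (fun x : ℤ → ℝ =>
      S (φ (M - 1)) (x M) + (∑ i ∈ Finset.Icc M (N - 1), S (x i) (x (i + 1))) +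
        S (x N) (φ (N + 1))) φ

/-- `φ` is a choice of polar angles for the sequence `A`, with consecutive angles within `(0, π)`
of each other. -/
def IsPolarLift (A : ℤ → ℝ × ℝ) (φ : ℤ → ℝ) : Prop :=
  (∀ n, ∃ ρ > (0 : ℝ), A n = ρ • uVec (φ n)) ∧ ∀ n, φ n < φ (n + 1) ∧ φ (n + 1) < φ n + π

/-- Every orbit of the outer billiard map `T` is locally minimizing with respect to the
generating function `S`. -/
def AllOrbitsLocMin (K : Set (ℝ × ℝ)) (T : ℝ × ℝ → ℝ × ℝ) (S : ℝ → ℝ → ℝ) : Prop :=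
  ∀ A : ℤ → ℝ × ℝ, (∀ n, A n ∉ K) → (∀ n, A (n + 1) = T (A n)) →
    ∀ φ : ℤ → ℝ, IsPolarLift A φ → LocMinConfig S φ

/-- Second partial derivative of `S` twice in the first argument. -/
def S11 (S : ℝ → ℝ → ℝ) (a b : ℝ) : ℝ := deriv (fun a' => deriv (fun a'' => S a'' b) a') a

/-- Mixed second partial derivative of `S`. -/
def S12 (S : ℝ → ℝ → ℝ) (a b : ℝ) : ℝ := deriv (fun a' => deriv (fun b' => S a' b') b) a

/-- Second partial derivative of `S` twice in the second argument. -/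
def S22 (S : ℝ → ℝ → ℝ) (a b : ℝ) : ℝ := deriv (fun b' => deriv (fun b'' => S a b'') b') b

/-! ### Parametrization of the boundary by its tangent angle -/

/-- `m` parametrizes `∂K` by the angle of its tangent: the boundary is traversed counterclockwise,
`uVec θ` is the tangent direction at `m θ` and `ρ θ > 0` is the radius of curvature there. The field
`detpos` says that the origin lies strictly to the left of every oriented tangent line. -/
structure TangentParam (K : Set (ℝ × ℝ)) (m : ℝ → ℝ × ℝ) (ρ : ℝ → ℝ) : Prop where
  cont : Continuous ρ
  pos : ∀ θ, 0 < ρ θ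
  deriv : ∀ θ, HasDerivAt m (ρ θ • uVec θ) θ
  per : ∀ θ, m (θ + 2 * π) = m θ
  range : frontier K = Set.range m
  detpos : ∀ θ, 0 < detV (m θ) (uVec θ)

open Filter Topology in
/-- The parametrization `m` is the polar parametrization of `∂K` composed with the inverse of the
tangent angle `Θ φ = φ + π / 2 - arctan (r' φ / r φ)`, which is strictly increasing because the
curvature is positive. -/
theorem exists_tangentParam {K : Set (ℝ × ℝ)} {r : ℝ → ℝ} (h : HasC2PosCurvBoundary K 0 r) :
    ∃ m ρ, TangentParam K m ρ := by
  obtain ⟨-, hr2, hper, hpos, hcurv, hfr⟩ := h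
  have hd0 : Differentiable ℝ r := hr2.differentiable (by norm_num)
  have hr1 : ContDiff ℝ 1 (deriv r) := ((contDiff_succ_iff_deriv (n := 1)).1 hr2).2.2
  have hd1 : Differentiable ℝ (deriv r) := hr1.differentiable (by norm_num)
  have hc2 : Continuous (deriv (deriv r)) := hr1.continuous_deriv (by norm_num)
  set d : ℝ → ℝ := fun φ => r φ ^ 2 + (deriv r φ) ^ 2 with hd
  have hdpos : ∀ φ, 0 < d φ := fun φ => by have := hpos φ; simp only [hd]; positivity
  set κ : ℝ → ℝ := fun φ => r φ ^ 2 + 2 * (deriv r φ) ^ 2 - r φ * deriv (deriv r) φ with hκ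
  set Θ : ℝ → ℝ := fun φ => φ + π / 2 - arctan (deriv r φ / r φ) with hΘ
  have hΘd : ∀ φ, HasDerivAt Θ (κ φ / d φ) φ := by
    intro φ
    have hne := (hpos φ).ne'
    have h1 := ((hd1 φ).hasDerivAt.div (hd0 φ).hasDerivAt hne).arctan
    have h2 := ((hasDerivAt_id φ).add_const (π / 2)).sub h1
    refine h2.congr_deriv ?_
    have h4 : (0:ℝ) < r φ ^ 2 + (deriv r φ) ^ 2 := hdpos φ
    have h5 : (1 : ℝ) + (deriv r φ / r φ) ^ 2 ≠ 0 := by positivity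
    simp only [hκ, hd, Pi.div_apply]
    field_simp
    ring
  have hΘc : Continuous Θ := continuous_iff_continuousAt.2 fun φ => (hΘd φ).continuousAt
  have hΘm : StrictMono Θ := strictMono_of_deriv_pos fun φ => by
    rw [(hΘd φ).deriv]; exact div_pos (hcurv φ) (hdpos φ)
  have hdper : ∀ φ, deriv r (φ + 2 * π) = deriv r φ := fun φ => by
    rw [← deriv_comp_add_const]; congr 1; ext x; exact hper x
  have hΘper : ∀ φ, Θ (φ + 2 * π) = Θ φ + 2 * π := fun φ => by
    simp only [hΘ, hdper, hper]; ring
  have hb : ∀ φ, φ ≤ Θ φ ∧ Θ φ ≤ φ + π := fun φ => by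
    have h1 := neg_pi_div_two_lt_arctan (deriv r φ / r φ)
    have h2 := arctan_lt_pi_div_two (deriv r φ / r φ)
    simp only [hΘ]; constructor <;> linarith
  have hΘs : Function.Surjective Θ := hΘc.surjective
    (tendsto_atTop_mono (fun φ => (hb φ).1) tendsto_id)
    (tendsto_atBot_mono (fun φ => (hb φ).2) (tendsto_atBot_add_const_right _ π tendsto_id))
  set e : ℝ ≃o ℝ := hΘm.orderIsoOfSurjective Θ hΘs with he
  have hee : ∀ x, e x = Θ x := fun x => rfl
  set Φ : ℝ → ℝ := fun θ => e.symm θ with hΦ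
  have hΘΦ : ∀ θ, Θ (Φ θ) = θ := fun θ => e.apply_symm_apply θ
  have hΦΘ : ∀ φ, Φ (Θ φ) = φ := fun φ => e.symm_apply_apply φ
  have hΦc : Continuous Φ := e.symm.continuous
  have hΦd : ∀ θ, HasDerivAt Φ ((κ (Φ θ) / d (Φ θ))⁻¹) θ := fun θ =>
    HasDerivAt.of_local_left_inverse hΦc.continuousAt (hΘd _)
      (div_pos (hcurv _) (hdpos _)).ne' (Eventually.of_forall hΘΦ)
  set γ : ℝ → ℝ × ℝ := fun φ => r φ • uVec φ with hγ
  have huV : ∀ φ, uVec (Θ φ) = ((deriv r φ * cos φ - r φ * sin φ) / √(d φ),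
      (deriv r φ * sin φ + r φ * cos φ) / √(d φ)) := by
    intro φ
    have hrp := hpos φ
    have hs : √(1 + (deriv r φ / r φ) ^ 2) = √(d φ) / r φ := by
      rw [← Real.sqrt_sq hrp.le, ← Real.sqrt_div (hdpos φ).le]
      congr 1
      simp only [hd, Real.sqrt_sq hrp.le]
      field_simp
    have hsd : √(d φ) ≠ 0 := (Real.sqrt_pos.2 (hdpos φ)).ne'
    have e1 : Θ φ = φ - arctan (deriv r φ / r φ) + π / 2 := by simp only [hΘ]; ring
    simp only [uVec, e1, cos_add_pi_div_two, sin_add_pi_div_two, cos_sub, sin_sub, cos_arctan,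
      sin_arctan, hs]
    ext <;> · simp only []; field_simp; try ring
  have hγd : ∀ φ, HasDerivAt γ (√(d φ) • uVec (Θ φ)) φ := by
    intro φ
    have hsd : √(d φ) ≠ 0 := (Real.sqrt_pos.2 (hdpos φ)).ne'
    have h1 := ((hd0 φ).hasDerivAt.mul (hasDerivAt_cos φ)).prodMk
      ((hd0 φ).hasDerivAt.mul (hasDerivAt_sin φ))
    refine (h1.congr_deriv ?_)
    rw [huV]
    ext
    · simp only [Prod.smul_mk, smul_eq_mul]; field_simp; ring
    · simp only [Prod.smul_mk, smul_eq_mul]; field_simp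
  refine ⟨γ ∘ Φ, fun θ => √(d (Φ θ)) * (κ (Φ θ) / d (Φ θ))⁻¹, ?_, ?_, ?_, ?_, ?_, ?_⟩
  · have hcr : Continuous r := hd0.continuous
    have hcd : Continuous (deriv r) := hd1.continuous
    have c1 : Continuous d := by simp only [hd]; fun_prop
    have c2 : Continuous κ := by simp only [hκ]; fun_prop
    refine (Real.continuous_sqrt.comp (c1.comp hΦc)).mul (Continuous.inv₀ ?_ ?_)
    · exact (c2.comp hΦc).div (c1.comp hΦc) fun θ => (hdpos _).ne'
    · exact fun θ => (div_pos (hcurv _) (hdpos _)).ne'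
  · intro θ
    exact mul_pos (Real.sqrt_pos.2 (hdpos _)) (inv_pos.2 (div_pos (hcurv _) (hdpos _)))
  · intro θ
    have := (hγd (Φ θ)).scomp θ (hΦd θ)
    rw [hΘΦ, smul_smul, mul_comm] at this
    exact this
  · intro θ
    have : Φ (θ + 2 * π) = Φ θ + 2 * π := by
      apply hΘm.injective
      rw [hΘΦ, hΘper, hΘΦ]
    simp only [Function.comp, this, hγ, hper, uVec, cos_add_two_pi, sin_add_two_pi]
  · rw [hfr]
    ext x
    simp only [mem_ofPred_eq, mem_range, zero_add, Function.comp]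
    constructor
    · rintro ⟨φ, rfl⟩
      exact ⟨Θ φ, by rw [hΦΘ]⟩
    · rintro ⟨θ, rfl⟩
      exact ⟨Φ θ, rfl⟩
  · intro θ
    have hrp := hpos (Φ θ)
    have hsd : 0 < √(d (Φ θ)) := (Real.sqrt_pos.2 (hdpos _))
    have h1 := huV (Φ θ)
    rw [hΘΦ] at h1
    rw [h1]
    simp only [detV, Function.comp, hγ, uVec, Prod.smul_mk, smul_eq_mul]
    have : r (Φ θ) * cos (Φ θ) * ((deriv r (Φ θ) * sin (Φ θ) + r (Φ θ) * cos (Φ θ)) / √(d (Φ θ)))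
      - r (Φ θ) * sin (Φ θ) * ((deriv r (Φ θ) * cos (Φ θ) - r (Φ θ) * sin (Φ θ)) / √(d (Φ θ)))
      = r (Φ θ) ^ 2 / √(d (Φ θ)) := by
      field_simp
      linear_combination r (Φ θ) * (cos_sq_add_sin_sq (Φ θ))
    rw [this]
    positivity

/-! ### Tangent lines and the outer billiard map -/

theorem detV_smul_left (c : ℝ) (u v : ℝ × ℝ) : detV (c • u) v = c * detV u v := by
  simp [detV]; ring

theorem detV_sub_right (u v w : ℝ × ℝ) : detV u (v - w) = detV u v - detV u w := by
  simp [detV]; ring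

theorem detV_self (u : ℝ × ℝ) : detV u u = 0 := by simp [detV]; ring

theorem detV_comm_neg (u v : ℝ × ℝ) : detV u v = -detV v u := by simp [detV]; ring

theorem continuous_uVec : Continuous uVec := by unfold uVec; fun_prop

theorem continuous_detV_right (u : ℝ × ℝ) : Continuous (detV u) := by unfold detV; fun_prop

theorem uVec_sq (θ : ℝ) : (uVec θ).1 ^ 2 + (uVec θ).2 ^ 2 = 1 := cos_sq_add_sin_sq θ

theorem uVec_ne_zero (θ : ℝ) : uVec θ ≠ 0 := fun h => by
  have := uVec_sq θ
  rw [h] at this; norm_num at this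

theorem uVec_add_pi (θ : ℝ) : uVec (θ + π) = -uVec θ := by simp [uVec]

theorem uVec_add_two_pi (θ : ℝ) : uVec (θ + 2 * π) = uVec θ := by simp [uVec]

theorem detV_uVec (a b : ℝ) : detV (uVec a) (uVec b) = sin (b - a) := by
  simp only [detV, uVec, sin_sub]; ring

/-- Two angles with the same direction differ by a multiple of `2π`. -/
theorem exists_int_of_smul_uVec {a b s t : ℝ} (hs : 0 < s) (ht : 0 < t)
    (h : s • uVec a = t • uVec b) : ∃ k : ℤ, b = a + k * (2 * π) := by
  have h1 : s * cos a = t * cos b := congrArg Prod.fst h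
  have h2 : s * sin a = t * sin b := congrArg Prod.snd h
  have hst : s = t := by
    have : s ^ 2 = t ^ 2 := by
      have e1 := cos_sq_add_sin_sq a
      have e2 := cos_sq_add_sin_sq b
      calc s ^ 2 = (s * cos a) ^ 2 + (s * sin a) ^ 2 := by linear_combination (-s ^ 2) * e1
        _ = t ^ 2 := by rw [h1, h2]; linear_combination (t ^ 2) * e2
    exact (pow_left_inj₀ hs.le ht.le two_ne_zero).1 this
  subst hst
  have h3 := mul_left_cancel₀ hs.ne' h1
  have h4 := mul_left_cancel₀ hs.ne' h2
  have h5 : (a : Real.Angle) = b := Real.Angle.cos_sin_inj h3 h4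
  obtain ⟨k, hk⟩ := Real.Angle.angle_eq_iff_two_pi_dvd_sub.1 h5
  exact ⟨-k, by push_cast; linarith⟩

/-- A vector with vanishing determinant against a unit vector is a multiple of it. -/
theorem eq_smul_of_detV_eq_zero {v : ℝ × ℝ} {θ : ℝ} (h : detV (uVec θ) v = 0) :
    ∃ c : ℝ, v = c • uVec θ := by
  refine ⟨v.1 * (uVec θ).1 + v.2 * (uVec θ).2, ?_⟩
  have h1 := uVec_sq θ
  simp only [detV] at h
  ext
  · simp only [Prod.smul_fst, smul_eq_mul]
    linear_combination (-v.1) * h1 - (uVec θ).2 * h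
  · simp only [Prod.smul_snd, smul_eq_mul]
    linear_combination (-v.2) * h1 + (uVec θ).1 * h

/-- A nonconstant linear functional does not attain its minimum over `K` at an interior point. -/
theorem detV_lt_of_mem_interior {K : Set (ℝ × ℝ)} {v M k : ℝ × ℝ} (hv : v ≠ 0)
    (h : ∀ k ∈ K, 0 ≤ detV v (k - M)) (hk : k ∈ interior K) : 0 < detV v (k - M) := by
  have hv2 : 0 < v.1 ^ 2 + v.2 ^ 2 := by
    by_contra! hcon
    apply hv
    have h1 : v.1 = 0 := by nlinarith [sq_nonneg v.1, sq_nonneg v.2]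
    have h2 : v.2 = 0 := by nlinarith [sq_nonneg v.1, sq_nonneg v.2]
    exact Prod.ext h1 h2
  have hc : Filter.Tendsto (fun t : ℝ => k + t • ((v.2, -v.1) : ℝ × ℝ)) (nhds 0) (nhds k) := by
    have : Continuous (fun t : ℝ => k + t • ((v.2, -v.1) : ℝ × ℝ)) := by fun_prop
    simpa using this.tendsto 0
  have h1 := hc.eventually (isOpen_interior.mem_nhds hk)
  obtain ⟨ε, hε, h2⟩ := Metric.eventually_nhds_iff.1 h1
  have h3 := h _ (interior_subset (h2 (y := ε / 2) (by
    rw [Real.dist_eq, sub_zero, abs_of_pos (by linarith)]; linarith)))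
  have h4 : detV v (k + (ε / 2) • ((v.2, -v.1) : ℝ × ℝ) - M)
      = detV v (k - M) - ε / 2 * (v.1 ^ 2 + v.2 ^ 2) := by
    simp [detV]; ring
  rw [h4] at h3
  nlinarith

namespace TangentParam

variable {K : Set (ℝ × ℝ)} {m : ℝ → ℝ × ℝ} {ρ : ℝ → ℝ}

theorem continuous (h : TangentParam K m ρ) : Continuous m :=
  continuous_iff_continuousAt.2 fun θ => (h.deriv θ).continuousAt

theorem deriv_fst (h : TangentParam K m ρ) (θ : ℝ) :
    HasDerivAt (fun t => (m t).1) (ρ θ • uVec θ).1 θ :=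
  (ContinuousLinearMap.fst ℝ ℝ ℝ).hasFDerivAt.comp_hasDerivAt θ (h.deriv θ)

theorem deriv_snd (h : TangentParam K m ρ) (θ : ℝ) :
    HasDerivAt (fun t => (m t).2) (ρ θ • uVec θ).2 θ :=
  (ContinuousLinearMap.snd ℝ ℝ ℝ).hasFDerivAt.comp_hasDerivAt θ (h.deriv θ)

theorem mem_frontier (h : TangentParam K m ρ) (θ : ℝ) : m θ ∈ frontier K := by
  rw [h.range]; exact mem_range_self θ

theorem mem (h : TangentParam K m ρ) (hcl : IsClosed K) (θ : ℝ) : m θ ∈ K :=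
  hcl.frontier_subset (h.mem_frontier θ)

theorem per_int (h : TangentParam K m ρ) (θ : ℝ) (k : ℤ) : m (θ + k * (2 * π)) = m θ := by
  have : Function.Periodic m (2 * π) := h.per
  exact this.int_mul k θ

/-- A point at which a line supports `K` from the right is the tangency point of its direction. -/
theorem exists_of_support (h : TangentParam K m ρ) (hcl : IsClosed K) (h0 : (0 : ℝ × ℝ) ∈ interior K)
    {v M : ℝ × ℝ} (hv : v ≠ 0) (hM : M ∈ K) (hs : ∀ k ∈ K, 0 ≤ detV v (k - M)) :
    ∃ θ c : ℝ, 0 < c ∧ v = c • uVec θ ∧ M = m θ := by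
  have hMf : M ∈ frontier K := by
    rw [hcl.frontier_eq]
    refine ⟨hM, fun hi => ?_⟩
    have := detV_lt_of_mem_interior hv hs hi
    simp [detV] at this
  rw [h.range] at hMf
  obtain ⟨θ, rfl⟩ := hMf
  have hmin : IsLocalMin (fun t => detV v (m t - m θ)) θ :=
    Filter.Eventually.of_forall fun t => by
      simpa [detV] using hs _ (h.mem hcl t)
  have hd : HasDerivAt (fun t => detV v (m t - m θ)) (detV v (ρ θ • uVec θ)) θ := by
    have h1 := h.deriv_fst θ
    have h2 := h.deriv_snd θ
    exact ((h2.sub_const (m θ).2).const_mul v.1).sub ((h1.sub_const (m θ).1).const_mul v.2)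
  have h3 := hmin.hasDerivAt_eq_zero hd
  have h4 : detV (uVec θ) v = 0 := by
    have : ρ θ * detV (uVec θ) v = 0 := by
      rw [← h3]; simp [detV]; ring_nf at h3 ⊢; simp [detV] at h3; linarith
    exact (mul_eq_zero.1 this).resolve_left (h.pos θ).ne'
  obtain ⟨c, rfl⟩ := eq_smul_of_detV_eq_zero h4
  refine ⟨θ, c, ?_, rfl, rfl⟩
  have h5 := detV_lt_of_mem_interior hv hs h0
  have h6 : detV (c • uVec θ) (0 - m θ) = c * detV (m θ) (uVec θ) := by simp [detV]; ring
  rw [h6] at h5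
  exact pos_of_mul_pos_left h5 (h.detpos θ).le

/-- `K` lies to the left of the oriented tangent line at `m θ`. -/
theorem support (h : TangentParam K m ρ) (hK : IsCompact K) (h0 : (0 : ℝ × ℝ) ∈ interior K)
    (θ : ℝ) : (∀ k ∈ K, 0 ≤ detV (uVec θ) (k - m θ)) ∧
      ∀ k ∈ K, detV (uVec θ) (k - m θ) = 0 → k = m θ := by
  have hmin : ∀ M ∈ K, (∀ k ∈ K, 0 ≤ detV (uVec θ) (k - M)) → M = m θ := by
    intro M hM hs
    obtain ⟨θ', c, hc, h1, rfl⟩ := h.exists_of_support hK.isClosed h0 (uVec_ne_zero θ) hM hs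
    obtain ⟨k, rfl⟩ := exists_int_of_smul_uVec hc (one_pos (α := ℝ)) (by rw [one_smul, ← h1])
    exact (h.per_int θ' k).symm
  obtain ⟨M, hM, hMmin⟩ := hK.exists_isMinOn ⟨0, interior_subset h0⟩
    (continuous_detV_right (uVec θ)).continuousOn
  have hs : ∀ k ∈ K, 0 ≤ detV (uVec θ) (k - M) := fun k hk => by
    rw [detV_sub_right]; exact sub_nonneg.2 (hMmin hk)
  have hMe := hmin M hM hs
  subst hMe
  refine ⟨hs, fun k hk hk0 => hmin k hk fun k' hk' => ?_⟩
  have := hs k' hk'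
  rw [detV_sub_right] at this hk0 ⊢
  linarith

theorem not_mem (h : TangentParam K m ρ) (hK : IsCompact K) (h0 : (0 : ℝ × ℝ) ∈ interior K)
    (θ : ℝ) {l : ℝ} (hl : l ≠ 0) : m θ + l • uVec θ ∉ K := by
  intro hmem
  have := (h.support hK h0 θ).2 _ hmem (by simp [detV]; ring)
  simp only [add_eq_left, smul_eq_zero, hl, uVec_ne_zero, or_self] at this

/-- A point determines the oriented tangent half line it lies on, among the forward half lines
(`s > 0`) as well as among the backward ones (`s < 0`): two of them meeting in a point would place
one tangency point to the right of the other tangent line. -/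
theorem inj (h : TangentParam K m ρ) (hK : IsCompact K) (h0 : (0 : ℝ × ℝ) ∈ interior K)
    {s θ θ' l l' : ℝ} (hs : s ≠ 0) (hl : 0 < l) (hl' : 0 < l')
    (he : m θ + (s * l) • uVec θ = m θ' + (s * l') • uVec θ') :
    l = l' ∧ ∃ k : ℤ, θ' = θ + k * (2 * π) := by
  have h1 := (h.support hK h0 θ).1 _ (h.mem hK.isClosed θ')
  have h2 := (h.support hK h0 θ').1 _ (h.mem hK.isClosed θ)
  have e1 : m θ' - m θ = (s * l) • uVec θ - (s * l') • uVec θ' := by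
    have : m θ' = m θ + (s * l) • uVec θ - (s * l') • uVec θ' := by rw [he]; abel
    rw [this]; abel
  have e2 : m θ - m θ' = (s * l') • uVec θ' - (s * l) • uVec θ := by
    rw [← neg_sub, e1]; abel
  have h1' : 0 ≤ -(s * l') * detV (uVec θ) (uVec θ') := by
    rw [e1] at h1; convert h1 using 1; simp [detV]; ring
  have h2' : 0 ≤ (s * l) * detV (uVec θ) (uVec θ') := by
    rw [e2] at h2; convert h2 using 1; simp [detV]; ring
  have hz : s * detV (uVec θ) (uVec θ') = 0 := by
    apply le_antisymm
    · by_contra! hc; nlinarith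
    · by_contra! hc; nlinarith
  have hz' : detV (uVec θ) (uVec θ') = 0 := (mul_eq_zero.1 hz).resolve_left hs
  have hm : m θ' = m θ := (h.support hK h0 θ).2 _ (h.mem hK.isClosed θ') (by
    rw [e1]
    have : detV (uVec θ) ((s * l) • uVec θ - (s * l') • uVec θ')
      = -(s * l') * detV (uVec θ) (uVec θ') := by simp [detV]; ring
    rw [this, hz', mul_zero])
  rw [hm, add_right_inj, mul_smul, mul_smul] at he
  have heu := smul_right_injective _ hs he
  obtain ⟨k, hk⟩ := exists_int_of_smul_uVec hl hl' heu
  refine ⟨?_, k, hk⟩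
  have hu : uVec θ' = uVec θ := by
    rw [hk]
    have : Function.Periodic uVec (2 * π) := uVec_add_two_pi
    exact this.int_mul k θ
  rw [hu] at heu
  exact smul_left_injective _ (uVec_ne_zero θ) heu

/-- The width of `K` transversally to `uVec θ` is positive. -/
theorem width_pos (h : TangentParam K m ρ) (θ : ℝ) :
    0 < detV (uVec θ) (m (θ + π) - m θ) := by
  have h1 := h.detpos θ
  have h2 := h.detpos (θ + π)
  rw [uVec_add_pi] at h2
  simp only [detV, Prod.fst_neg, Prod.snd_neg, Prod.fst_sub, Prod.snd_sub] at *
  linarith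

/-- Every point of the exterior is `m θ - l • uVec θ` for some `l > 0`, and `T` reflects it in the
tangency point `m θ`. -/
theorem exists_neg (h : TangentParam K m ρ) (hcl : IsClosed K) (h0 : (0 : ℝ × ℝ) ∈ interior K)
    {T : ℝ × ℝ → ℝ × ℝ} (hT : IsOuterBilliard K T) {A : ℝ × ℝ} (hA : A ∉ K) :
    ∃ θ l : ℝ, 0 < l ∧ A = m θ - l • uVec θ ∧ T A = m θ + l • uVec θ := by
  obtain ⟨-, h1, h2, h3⟩ := hT A hA
  set M := (1 / 2 : ℝ) • (A + T A) with hM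
  have hMK : M ∈ K := hcl.frontier_subset h1
  have hv : T A - A ≠ 0 := by
    intro hv
    have : T A = A := sub_eq_zero.1 hv
    apply hA
    convert hMK
    rw [hM, this, ← two_smul ℝ A, smul_smul]; norm_num
  obtain ⟨θ, c, hc, hvc, hMm⟩ := h.exists_of_support hcl h0 hv hMK h3
  refine ⟨θ, c / 2, by linarith, ?_, ?_⟩
  · rw [← hMm, div_eq_inv_mul, mul_smul, ← hvc, hM]; module
  · rw [← hMm, div_eq_inv_mul, mul_smul, ← hvc, hM]; module

/-- The outer billiard map in terms of tangent lines. It is not assumed that `T` is determined by its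
defining property; this follows from the uniqueness of the tangent half line through a point. -/
theorem T_apply (h : TangentParam K m ρ) (hK : IsCompact K) (h0 : (0 : ℝ × ℝ) ∈ interior K)
    {T : ℝ × ℝ → ℝ × ℝ} (hT : IsOuterBilliard K T) {θ l : ℝ} (hl : 0 < l) :
    T (m θ - l • uVec θ) = m θ + l • uVec θ := by
  have hA : m θ - l • uVec θ ∉ K := by
    have := h.not_mem hK h0 θ (l := -l) (by linarith)
    rwa [neg_smul, ← sub_eq_add_neg] at this
  obtain ⟨θ', l', hl', h1, h2⟩ := h.exists_neg hK.isClosed h0 hT hA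
  have h3 : m θ + ((-1) * l) • uVec θ = m θ' + ((-1) * l') • uVec θ' := by
    simpa [sub_eq_add_neg] using h1
  obtain ⟨rfl, k, rfl⟩ := h.inj hK h0 (by norm_num) hl hl' h3
  have : Function.Periodic uVec (2 * π) := uVec_add_two_pi
  rw [h2, h.per_int, this.int_mul k θ]

/-- Every point of the exterior lies on a forward tangent half line: the intermediate value theorem
supplies the second tangent line through the point. This is the surjectivity of `T`. -/
theorem exists_pos (h : TangentParam K m ρ) (hK : IsCompact K) (h0 : (0 : ℝ × ℝ) ∈ interior K)
    {T : ℝ × ℝ → ℝ × ℝ} (hT : IsOuterBilliard K T) {A : ℝ × ℝ} (hA : A ∉ K) :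
    ∃ θ l : ℝ, 0 < l ∧ A = m θ + l • uVec θ := by
  obtain ⟨θ, l, hl, hAe, -⟩ := h.exists_neg hK.isClosed h0 hT hA
  set f : ℝ → ℝ := fun t => detV (uVec t) (A - m t) with hf
  have hfd : HasDerivAt f l θ := by
    have h1 := h.deriv_fst θ
    have h2 := h.deriv_snd θ
    have h3 := ((hasDerivAt_cos θ).mul (h2.const_sub A.2)).sub
      ((hasDerivAt_sin θ).mul (h1.const_sub A.1))
    refine h3.congr_deriv ?_
    rw [hAe]
    simp [uVec]
    linear_combination l * cos_sq_add_sin_sq θ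
  have hfc : Continuous f := by
    have := h.continuous
    simp only [hf, detV, uVec]; fun_prop
  have hf0 : f θ = 0 := by simp only [hf, hAe]; simp [detV]; ring
  -- just before `θ` the point is strictly to the right of the tangent line
  obtain ⟨t, ht1, ht2, ht3⟩ : ∃ t, θ - π < t ∧ t < θ ∧ f t < 0 := by
    have h1 : Filter.Tendsto (slope f θ) (nhdsWithin θ {θ}ᶜ) (nhds l) := hasDerivAt_iff_tendsto_slope.1 hfd
    have h2 := (h1.mono_left (nhdsWithin_mono θ (fun x (hx : x ∈ Iio θ) => ne_of_lt hx))).eventually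
      (lt_mem_nhds hl)
    have h3 : ∀ᶠ t in nhdsWithin θ (Iio θ), θ - π < t :=
      nhdsWithin_le_nhds (lt_mem_nhds (by linarith [pi_pos]))
    obtain ⟨t, h4, h5, h6⟩ := (h2.and (h3.and self_mem_nhdsWithin)).exists
    refine ⟨t, h5, h6, ?_⟩
    rw [slope_def_field, hf0, sub_zero] at h4
    have h7 : t - θ < 0 := sub_neg.2 h6
    by_contra! hc
    exact absurd (div_nonpos_of_nonneg_of_nonpos hc h7.le) (not_le.2 h4)
  have hfπ : 0 < f (θ - π) := by
    have h1 := h.width_pos (θ - π)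
    rw [sub_add_cancel] at h1
    have h2 : uVec θ = -uVec (θ - π) := by rw [← uVec_add_pi, sub_add_cancel]
    have h3 : f (θ - π) = detV (uVec (θ - π)) (m θ - m (θ - π)) := by
      simp only [hf, hAe, h2]; simp [detV]; ring
    rwa [h3]
  obtain ⟨t', ⟨h1, h2⟩, h3⟩ := intermediate_value_Icc' ht1.le hfc.continuousOn ⟨ht3.le, hfπ.le⟩
  obtain ⟨c, hc⟩ := eq_smul_of_detV_eq_zero h3
  have hAc : A = m t' + c • uVec t' := by rw [← hc]; abel
  -- a negative `c` would make `θ` and `t' < θ`, less than `π` apart, parameters of the same half line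
  rcases lt_trichotomy c 0 with hneg | hz | hpos
  · exfalso
    have h4 : m t' + ((-1) * (-c)) • uVec t' = m θ + ((-1) * l) • uVec θ := by
      simp only [neg_mul, one_mul, neg_neg, neg_smul, ← sub_eq_add_neg]
      rw [← hAc, ← hAe]
    obtain ⟨-, k, hk⟩ := h.inj hK h0 (by norm_num) (by linarith) hl h4
    have hπ := pi_pos
    have hk1 : (0 : ℝ) < k := by
      by_contra! hcon; nlinarith
    have hk2 : (k : ℝ) < 1 := by
      by_contra! hcon; nlinarith
    have hk3 : (0 : ℤ) < k := by exact_mod_cast hk1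
    have hk4 : k < 1 := by exact_mod_cast hk2
    omega
  · exfalso
    apply hA
    rw [hAc, hz, zero_smul, add_zero]
    exact h.mem hK.isClosed t'
  · exact ⟨t', c, hpos, hAc⟩

end TangentParam

/-! ### From lower bounds on Birkhoff sums to an integral inequality -/

open Filter Topology in
/-- Fatou lemma for the Bochner integral: a nonnegative integrable function dominated by the
pointwise limit of nonnegative functions has integral at most the limit of bounds for theirs. -/
theorem integral_le_of_fatou {α : Type*} [MeasurableSpace α] {μ : Measure α} {F : ℕ → α → ℝ}
    {G : α → ℝ} {c : ℕ → ℝ} {c₀ : ℝ} (hF : ∀ n, Integrable (F n) μ)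
    (hF0 : ∀ n, 0 ≤ᵐ[μ] F n) (hG : Integrable G μ) (hG0 : 0 ≤ᵐ[μ] G)
    (hlim : ∀ᵐ x ∂μ, ∃ l, G x ≤ l ∧ Tendsto (fun n => F n x) atTop (𝓝 l))
    (hc : ∀ n, ∫ x, F n x ∂μ ≤ c n) (hcl : Tendsto c atTop (𝓝 c₀)) :
    ∫ x, G x ∂μ ≤ c₀ := by
  have hc0 : 0 ≤ c₀ := ge_of_tendsto' hcl fun n => (integral_nonneg_of_ae (hF0 n)).trans (hc n)
  rw [← ENNReal.ofReal_le_ofReal_iff hc0, ofReal_integral_eq_lintegral_ofReal hG hG0]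
  calc ∫⁻ x, ENNReal.ofReal (G x) ∂μ
      ≤ ∫⁻ x, liminf (fun n => ENNReal.ofReal (F n x)) atTop ∂μ := by
        apply lintegral_mono_ae
        filter_upwards [hlim] with x ⟨l, hl, hx⟩
        exact (ENNReal.ofReal_le_ofReal hl).trans_eq
          ((ENNReal.continuous_ofReal.tendsto l).comp hx).liminf_eq.symm
    _ ≤ liminf (fun n => ∫⁻ x, ENNReal.ofReal (F n x) ∂μ) atTop :=
        lintegral_liminf_le' fun n => (hF n).aestronglyMeasurable.aemeasurable.ennreal_ofReal
    _ ≤ liminf (fun n => ENNReal.ofReal (c n)) atTop := by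
        refine liminf_le_liminf (Eventually.of_forall fun n => ?_)
        rw [← ofReal_integral_eq_lintegral_ofReal (hF n) (hF0 n)]
        exact ENNReal.ofReal_le_ofReal (hc n)
    _ = ENNReal.ofReal c₀ := ((ENNReal.continuous_ofReal.tendsto c₀).comp hcl).liminf_eq

open Filter Topology in
/-- A measure preserving map of a possibly infinite measure space and an integrable `q` whose
Birkhoff sums are bounded below by `-p' x - p (T^[N] x)` satisfy `0 ≤ ∫ q`, provided there are
integrable cutoffs `χ n ↑ 1` that are asymptotically invariant in `L¹`.

The infimum `h` of `birkhoffSum T q N + p ∘ T^[N]` over `N` satisfies `h ≤ q + h ∘ T`. Nothing is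
known about the integrability of `h`, so it is truncated at height `k`, multiplied by a cutoff and
integrated: the coboundary contributes at most `k ∫ |χ ∘ T - χ|`, which a diagonal choice of the
cutoffs sends to `0`. No sign or integrability is needed for the boundary terms `p` and `p'`. -/
theorem integral_nonneg_of_birkhoff_bound {α : Type*} [MeasurableSpace α] {μ : Measure α}
    {T : α → α} (hT : MeasurePreserving T μ μ) {q p p' : α → ℝ} (hq : Integrable q μ)
    (hp : AEMeasurable p μ)
    (hlow : ∀ᵐ x ∂μ, ∀ N : ℕ, -p' x ≤ birkhoffSum T q N x + p (T^[N] x))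
    {χ : ℕ → α → ℝ} (hχm : ∀ n, Measurable (χ n)) (hχ0 : ∀ n x, 0 ≤ χ n x)
    (hχ1 : ∀ n x, χ n x ≤ 1) (hχi : ∀ n, Integrable (χ n) μ)
    (hχl : ∀ x, Tendsto (fun n => χ n x) atTop (𝓝 1))
    (hχT : Tendsto (fun n => ∫ x, |χ n (T x) - χ n x| ∂μ) atTop (𝓝 0)) :
    0 ≤ ∫ x, q x ∂μ := by
  set u : ℕ → α → ℝ := fun N x => birkhoffSum T q N x + p (T^[N] x) with hu
  set h : α → ℝ := fun x => ⨅ N, u N x with hh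
  have hqm : AEMeasurable q μ := hq.aestronglyMeasurable.aemeasurable
  have hTn : ∀ N, MeasurePreserving (T^[N]) μ μ := fun N => hT.iterate N
  have hum : ∀ N, AEMeasurable (u N) μ := by
    intro N
    refine AEMeasurable.add ?_ (hp.comp_quasiMeasurePreserving (hTn N).quasiMeasurePreserving)
    exact Finset.aemeasurable_fun_sum _ fun k _ =>
      hqm.comp_quasiMeasurePreserving (hTn k).quasiMeasurePreserving
  have hhm : AEMeasurable h μ := AEMeasurable.iInf hum
  have hhTm : AEMeasurable (fun x => h (T x)) μ :=
    hhm.comp_quasiMeasurePreserving hT.quasiMeasurePreserving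
  have hlowT := hT.quasiMeasurePreserving.ae hlow
  -- `h` is a subsolution of the cohomological equation
  have hsub : ∀ᵐ x ∂μ, h x ≤ q x + h (T x) := by
    filter_upwards [hlow, hlowT] with x hx hx'
    have hb : BddBelow (range fun N => u N x) := ⟨-p' x, by rintro _ ⟨N, rfl⟩; exact hx N⟩
    rw [← sub_le_iff_le_add']
    refine le_ciInf fun N => ?_
    rw [sub_le_iff_le_add']
    refine (ciInf_le hb (N + 1)).trans_eq ?_
    simp only [hu, birkhoffSum_succ', Function.iterate_succ, Function.comp]
    ring
  -- truncation at height `c`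
  set cl : ℝ → ℝ → ℝ := fun c t => max (-c) (min c t) with hcl
  have hclm : ∀ c, Measurable (cl c) := fun c => by simp only [hcl]; fun_prop
  have hclb : ∀ c t, 0 ≤ c → |cl c t| ≤ c := by
    intro c t hc
    simp only [hcl, abs_le]
    exact ⟨le_max_left _ _, max_le (by linarith) (min_le_left _ _)⟩
  have hcl1 : ∀ c s t d : ℝ, s ≤ d + t → cl c s - cl c t ≤ max d 0 := by
    intro c s t d hst
    simp only [hcl]
    rcases max_cases d 0 with h1 | h1 <;> rcases min_cases c s with h2 | h2 <;>
      rcases min_cases c t with h3 | h3 <;> rcases max_cases (-c) (min c s) with h4 | h4 <;>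
      rcases max_cases (-c) (min c t) with h5 | h5 <;> linarith
  have hcll : ∀ t, Tendsto (fun k : ℕ => cl k t) atTop (𝓝 t) := by
    intro t
    apply tendsto_const_nhds.congr'
    filter_upwards [(tendsto_natCast_atTop_atTop (R := ℝ)).eventually_ge_atTop |t|] with k hk
    have := abs_le.1 hk
    simp only [hcl]
    rw [min_eq_right this.2, max_eq_right this.1]
  -- a diagonal choice of the cutoffs
  have hN : ∀ k : ℕ, ∃ n, k ≤ n ∧ (k : ℝ) * ∫ x, |χ n (T x) - χ n x| ∂μ ≤ 1 / ((k : ℝ) + 1) := by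
    intro k
    have h1 : Tendsto (fun n => (k : ℝ) * ∫ x, |χ n (T x) - χ n x| ∂μ) atTop (𝓝 0) := by
      simpa using hχT.const_mul (k : ℝ)
    have h2 := h1.eventually (ge_mem_nhds (show (0 : ℝ) < 1 / ((k : ℝ) + 1) by positivity))
    obtain ⟨n, h3, h4⟩ := (h2.and (eventually_ge_atTop k)).exists
    exact ⟨n, h4, h3⟩
  choose N hNk hNε using hN
  have hNt : Tendsto N atTop atTop := tendsto_atTop_mono hNk tendsto_id
  set f : ℕ → α → ℝ := fun k x => cl k (h x) - cl k (h (T x)) with hf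
  have hqp : Integrable (fun x => max (q x) 0) μ := hq.pos_part
  have hχTi : ∀ n, Integrable (fun x => χ n (T x)) μ := fun n => hT.integrable_comp_of_integrable (hχi n)
  have hbdd : ∀ (k : ℕ) (g : α → ℝ), AEMeasurable g μ → ∀ w : α → ℝ, Integrable w μ →
      Integrable (fun x => w x * cl k (g x)) μ := by
    intro k g hg w hw
    refine hw.mul_bdd (c := k) ((hclm k).comp_aemeasurable hg).aestronglyMeasurable ?_
    filter_upwards with x
    exact hclb _ _ (Nat.cast_nonneg k)
  have hχq : ∀ n, Integrable (fun x => χ n x * max (q x) 0) μ := by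
    intro n
    refine hqp.bdd_mul (c := 1) (hχm n).aestronglyMeasurable ?_
    filter_upwards with x
    rw [Real.norm_eq_abs, abs_of_nonneg (hχ0 n x)]; exact hχ1 n x
  have hkey : ∀ k : ℕ, -((k : ℝ) * ∫ x, |χ (N k) (T x) - χ (N k) x| ∂μ) ≤ ∫ x, χ (N k) x * f k x ∂μ := by
    intro k
    have e1 : ∫ x, χ (N k) x * cl k (h x) ∂μ = ∫ x, χ (N k) (T x) * cl k (h (T x)) ∂μ := by
      have := integral_map (μ := μ) (φ := T) hT.measurable.aemeasurable
        (f := fun x => χ (N k) x * cl k (h x)) (by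
          rw [hT.map_eq]; exact (hbdd k h hhm _ (hχi _)).aestronglyMeasurable)
      rw [hT.map_eq] at this
      exact this
    have e2 : ∫ x, χ (N k) x * f k x ∂μ
        = ∫ x, (χ (N k) (T x) - χ (N k) x) * cl k (h (T x)) ∂μ := by
      simp only [hf, mul_sub, sub_mul]
      rw [integral_sub (hbdd k h hhm _ (hχi _)) (hbdd k _ hhTm _ (hχi _)),
        integral_sub (hbdd k _ hhTm _ (hχTi _)) (hbdd k _ hhTm _ (hχi _)), e1]
    rw [e2, ← integral_const_mul, ← integral_neg]
    have i1 : Integrable (fun x => χ (N k) (T x) - χ (N k) x) μ := (hχTi _).sub (hχi _)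
    apply integral_mono ((i1.abs.const_mul _).neg) (hbdd k _ hhTm _ i1)
    intro x
    have := hclb k (h (T x)) (Nat.cast_nonneg k)
    have h3 : |(χ (N k) (T x) - χ (N k) x) * cl k (h (T x))| ≤ k * |χ (N k) (T x) - χ (N k) x| := by
      rw [abs_mul, mul_comm]; gcongr
    exact (abs_le.1 h3).1
  -- the functions `χ (q⁺ - f)` are nonnegative, with limit `q⁺ - h + h ∘ T ≥ q⁻`
  have hfin : ∫ x, max (-q x) 0 ∂μ ≤ ∫ x, max (q x) 0 ∂μ := by
    have hχf : ∀ k, Integrable (fun x => χ (N k) x * f k x) μ := fun k => by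
      simp only [hf, mul_sub]
      exact (hbdd k h hhm _ (hχi _)).sub (hbdd k _ hhTm _ (hχi _))
    refine integral_le_of_fatou (F := fun k x => χ (N k) x * max (q x) 0 - χ (N k) x * f k x)
      (c := fun k => (∫ x, max (q x) 0 ∂μ) + 1 / ((k : ℝ) + 1)) ?_ ?_ hq.neg_part ?_ ?_ ?_ ?_
    · exact fun k => (hχq _).sub (hχf k)
    · intro k
      filter_upwards [hsub] with x hx
      have := hcl1 k _ _ _ hx
      simp only [hf, Pi.zero_apply, ← mul_sub]
      exact mul_nonneg (hχ0 _ _) (by linarith)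
    · filter_upwards with x using le_max_right _ _
    · filter_upwards [hsub] with x hx
      refine ⟨1 * max (q x) 0 - 1 * (h x - h (T x)), ?_, ?_⟩
      · rcases max_cases (q x) 0 with h1 | h1 <;> rcases max_cases (-q x) 0 with h2 | h2 <;> linarith
      · have a1 := (hχl x).comp hNt
        exact (a1.mul_const _).sub (a1.mul ((hcll _).sub (hcll _)))
    · intro k
      rw [integral_sub (hχq _) (hχf k)]
      have h1 := hkey k
      have h2 := hNε k
      have h3 : ∫ x, χ (N k) x * max (q x) 0 ∂μ ≤ ∫ x, max (q x) 0 ∂μ := by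
        apply integral_mono (hχq _) hqp
        intro x
        exact mul_le_of_le_one_left (le_max_right _ _) (hχ1 _ _)
      linarith
    · simpa using tendsto_const_nhds.add (tendsto_one_div_add_atTop_nhds_zero_nat (𝕜 := ℝ))
  have hdec : ∫ x, q x ∂μ = ∫ x, max (q x) 0 ∂μ - ∫ x, max (-q x) 0 ∂μ := by
    rw [← integral_sub hqp hq.neg_part]
    congr 1; ext x
    rcases max_cases (q x) 0 with h1 | h1 <;> rcases max_cases (-q x) 0 with h2 | h2 <;> linarith
  linarith

/-! ### Tangent coordinates and preservation of area -/

/-- The point of the tangent line of `∂K` at `m θ` with signed coordinate `s * l`. -/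
def tangentPt (m : ℝ → ℝ × ℝ) (s : ℝ) (p : ℝ × ℝ) : ℝ × ℝ := m p.1 + (s * p.2) • uVec p.1

/-- Domain of the tangent coordinates `(θ, l)` of the exterior of `K`. -/
def tangentDom : Set (ℝ × ℝ) := Ico 0 (2 * π) ×ˢ Ioi 0

theorem measurableSet_tangentDom : MeasurableSet tangentDom :=
  measurableSet_Ico.prod measurableSet_Ioi

/-- The derivative of `tangentPt m s` at `p`. -/
def tangentDeriv (ρ : ℝ → ℝ) (s : ℝ) (p : ℝ × ℝ) : ℝ × ℝ →L[ℝ] ℝ × ℝ :=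
  (Matrix.toLin (.finTwoProd ℝ) (.finTwoProd ℝ)
    !![ρ p.1 * cos p.1 - s * p.2 * sin p.1, s * cos p.1;
       ρ p.1 * sin p.1 + s * p.2 * cos p.1, s * sin p.1]).toContinuousLinearMap

theorem det_tangentDeriv (ρ : ℝ → ℝ) (s : ℝ) (p : ℝ × ℝ) :
    (tangentDeriv ρ s p).det = -(s ^ 2 * p.2) := by
  have h := cos_sq_add_sin_sq p.1
  unfold tangentDeriv
  simp only [LinearMap.det_toContinuousLinearMap, LinearMap.det_toLin, Matrix.det_fin_two_of]
  linear_combination (-(s ^ 2 * p.2)) * h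

namespace TangentParam

variable {K : Set (ℝ × ℝ)} {m : ℝ → ℝ × ℝ} {ρ : ℝ → ℝ} {T : ℝ × ℝ → ℝ × ℝ}

theorem hasFDerivAt_tangentPt (h : TangentParam K m ρ) (s : ℝ) (p : ℝ × ℝ) :
    HasFDerivAt (tangentPt m s) (tangentDeriv ρ s p) p := by
  have e1 : HasFDerivAt (fun p : ℝ × ℝ => (m p.1).1 + s * p.2 * cos p.1) _ p :=
    ((h.deriv_fst p.1).comp_hasFDerivAt p hasFDerivAt_fst).add
      ((hasFDerivAt_snd.const_mul s).mul
        ((hasDerivAt_cos p.1).comp_hasFDerivAt p (hasFDerivAt_fst (𝕜 := ℝ) (p := p))))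
  have e2 : HasFDerivAt (fun p : ℝ × ℝ => (m p.1).2 + s * p.2 * sin p.1) _ p :=
    ((h.deriv_snd p.1).comp_hasFDerivAt p hasFDerivAt_fst).add
      ((hasFDerivAt_snd.const_mul s).mul
        ((hasDerivAt_sin p.1).comp_hasFDerivAt p (hasFDerivAt_fst (𝕜 := ℝ) (p := p))))
  refine (e1.prodMk e2).congr_fderiv ?_
  unfold tangentDeriv
  rw [Matrix.toLin_finTwoProd_toContinuousLinearMap]
  ext <;> simp [uVec] <;> ring

theorem tangentPt_inj (h : TangentParam K m ρ) (hK : IsCompact K) (h0 : (0 : ℝ × ℝ) ∈ interior K)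
    {s : ℝ} (hs : s ≠ 0) : InjOn (tangentPt m s) tangentDom := by
  rintro ⟨θ, l⟩ ⟨⟨h1, h2⟩, hl⟩ ⟨θ', l'⟩ ⟨⟨h1', h2'⟩, hl'⟩ he
  obtain ⟨rfl, k, hk⟩ := h.inj hK h0 hs hl hl' he
  simp only at h1 h2 h1' h2' hk
  have hk0 : k = 0 := by
    have := pi_pos
    have a1 : (k : ℝ) < 1 := by by_contra! hc; nlinarith
    have a2 : (-1 : ℝ) < k := by by_contra! hc; nlinarith
    have : k < 1 := by exact_mod_cast a1
    have : -1 < k := by exact_mod_cast a2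
    omega
  subst hk0
  simp [hk]

theorem exists_mem_dom (h : TangentParam K m ρ) (s θ : ℝ) {l : ℝ} (hl : 0 < l) :
    m θ + (s * l) • uVec θ ∈ tangentPt m s '' tangentDom := by
  obtain ⟨k, hk, -⟩ := existsUnique_add_zsmul_mem_Ico (a := 2 * π) (by positivity) θ 0
  refine ⟨(θ + k • (2 * π), l), ⟨by simpa using hk, hl⟩, ?_⟩
  have e : uVec (θ + k * (2 * π)) = uVec θ := by simp [uVec]
  simp only [tangentPt, zsmul_eq_mul, h.per_int, e]

theorem image_neg (h : TangentParam K m ρ) (hK : IsCompact K) (h0 : (0 : ℝ × ℝ) ∈ interior K)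
    (hT : IsOuterBilliard K T) : tangentPt m (-1) '' tangentDom = Kᶜ := by
  apply Subset.antisymm
  · rintro _ ⟨⟨θ, l⟩, ⟨-, hl⟩, rfl⟩
    exact h.not_mem hK h0 θ (by simpa using (ne_of_gt hl : l ≠ 0))
  · intro A hA
    obtain ⟨θ, l, hl, rfl, -⟩ := h.exists_neg hK.isClosed h0 hT hA
    have := h.exists_mem_dom (-1) θ hl
    simpa [sub_eq_add_neg] using this

theorem image_pos (h : TangentParam K m ρ) (hK : IsCompact K) (h0 : (0 : ℝ × ℝ) ∈ interior K)
    (hT : IsOuterBilliard K T) : tangentPt m 1 '' tangentDom = Kᶜ := by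
  apply Subset.antisymm
  · rintro _ ⟨⟨θ, l⟩, ⟨-, hl⟩, rfl⟩
    exact h.not_mem hK h0 θ (by simpa using (ne_of_gt hl : l ≠ 0))
  · intro A hA
    obtain ⟨θ, l, hl, rfl⟩ := h.exists_pos hK h0 hT hA
    simpa using h.exists_mem_dom 1 θ hl

/-- In tangent coordinates `(θ, l)`, forward or backward, Lebesgue measure on the exterior has density
`l`. -/
theorem map_tangentPt (h : TangentParam K m ρ) (hK : IsCompact K) (h0 : (0 : ℝ × ℝ) ∈ interior K)
    {s : ℝ} (hs : s ^ 2 = 1) :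
    Measure.map (tangentPt m s)
      ((volume.restrict tangentDom).withDensity fun p => ENNReal.ofReal |p.2|) =
      volume.restrict (tangentPt m s '' tangentDom) := by
  have hs0 : s ≠ 0 := by rintro rfl; norm_num at hs
  have := map_withDensity_abs_det_fderiv_eq_addHaar (μ := (volume : Measure (ℝ × ℝ)))
    (measurableSet_tangentDom.nullMeasurableSet)
    (fun p _ => (h.hasFDerivAt_tangentPt s p).hasFDerivWithinAt) (h.tangentPt_inj hK h0 hs0)
  simpa only [det_tangentDeriv, hs, one_mul, abs_neg] using this

/-- In tangent coordinates, `T` exchanges backward coordinates for forward ones. -/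
theorem T_tangentPt (h : TangentParam K m ρ) (hK : IsCompact K) (h0 : (0 : ℝ × ℝ) ∈ interior K)
    (hT : IsOuterBilliard K T) {p : ℝ × ℝ} (hp : p ∈ tangentDom) :
    T (tangentPt m (-1) p) = tangentPt m 1 p := by
  have := h.T_apply hK h0 hT (θ := p.1) (l := p.2) hp.2
  simpa [tangentPt, sub_eq_add_neg] using this

theorem continuous_tangentPt (h : TangentParam K m ρ) (s : ℝ) : Continuous (tangentPt m s) :=
  continuous_iff_continuousAt.2 fun p => (h.hasFDerivAt_tangentPt s p).continuousAt

open Classical in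
/-- The outer billiard map, extended by the identity to `K`; unlike `T`, whose values on `K` are
arbitrary, it is measurable on the whole plane. -/
def _root_.extT (K : Set (ℝ × ℝ)) (T : ℝ × ℝ → ℝ × ℝ) : ℝ × ℝ → ℝ × ℝ := Kᶜ.piecewise T id

theorem _root_.extT_of_notMem {x : ℝ × ℝ} (hx : x ∉ K) : extT K T x = T x :=
  by classical exact piecewise_eq_of_mem _ _ _ hx

theorem preimage_T (h : TangentParam K m ρ) (hK : IsCompact K) (h0 : (0 : ℝ × ℝ) ∈ interior K)
    (hT : IsOuterBilliard K T) (B : Set (ℝ × ℝ)) :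
    Kᶜ ∩ T ⁻¹' B = tangentPt m (-1) '' (tangentDom ∩ tangentPt m 1 ⁻¹' B) := by
  ext x
  rw [← h.image_neg hK h0 hT]
  constructor
  · rintro ⟨⟨p, hp, rfl⟩, hx⟩
    exact ⟨p, ⟨hp, by rwa [mem_preimage, ← h.T_tangentPt hK h0 hT hp]⟩, rfl⟩
  · rintro ⟨p, ⟨hp, hb⟩, rfl⟩
    exact ⟨⟨p, hp, rfl⟩, by rwa [mem_preimage, h.T_tangentPt hK h0 hT hp]⟩

theorem measurable_extT (h : TangentParam K m ρ) (hK : IsCompact K)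
    (h0 : (0 : ℝ × ℝ) ∈ interior K) (hT : IsOuterBilliard K T) : Measurable (extT K T) := by
  intro B hB
  have : extT K T ⁻¹' B = (Kᶜ ∩ T ⁻¹' B) ∪ (K ∩ B) := by
    unfold extT
    rw [piecewise_preimage, Set.ite]
    simp [inter_comm, sdiff_eq]
  rw [this, h.preimage_T hK h0 hT]
  refine MeasurableSet.union ?_ (hK.isClosed.measurableSet.inter hB)
  refine MeasurableSet.image_of_continuousOn_injOn
    (measurableSet_tangentDom.inter ((h.continuous_tangentPt 1).measurable hB))
    (h.continuous_tangentPt (-1)).continuousOn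
    ((h.tangentPt_inj hK h0 (by norm_num)).mono inter_subset_left)

/-- Outer billiards preserve area: in the tangent coordinates `(θ, l)` both `x` and `T x` have
the same Jacobian `l`. -/
theorem measurePreserving_extT (h : TangentParam K m ρ) (hK : IsCompact K)
    (h0 : (0 : ℝ × ℝ) ∈ interior K) (hT : IsOuterBilliard K T) :
    MeasurePreserving (extT K T) (volume.restrict Kᶜ) (volume.restrict Kᶜ) := by
  refine ⟨h.measurable_extT hK h0 hT, ?_⟩
  have h1 := h.map_tangentPt hK h0 (s := -1) (by norm_num)
  have h2 := h.map_tangentPt hK h0 (s := 1) (by norm_num)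
  rw [h.image_neg hK h0 hT] at h1
  rw [h.image_pos hK h0 hT] at h2
  conv_lhs => rw [← h1]
  conv_rhs => rw [← h2]
  rw [Measure.map_map (h.measurable_extT hK h0 hT) (h.continuous_tangentPt _).measurable]
  refine Measure.map_congr ?_
  refine (withDensity_absolutelyContinuous _ _).ae_le ?_
  filter_upwards [ae_restrict_mem measurableSet_tangentDom] with p hp
  have hx : tangentPt m (-1) p ∉ K := by
    have : tangentPt m (-1) p ∈ Kᶜ := h.image_neg hK h0 hT ▸ mem_image_of_mem _ hp
    exact this
  rw [Function.comp_apply, extT_of_notMem hx, h.T_tangentPt hK h0 hT hp]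

theorem T_bijOn (h : TangentParam K m ρ) (hK : IsCompact K)
    (h0 : (0 : ℝ × ℝ) ∈ interior K) (hT : IsOuterBilliard K T) : BijOn T Kᶜ Kᶜ := by
  refine ⟨fun x hx => (hT x hx).1, ?_, ?_⟩
  · rw [← h.image_neg hK h0 hT]
    rintro _ ⟨p, hp, rfl⟩ _ ⟨p', hp', rfl⟩ he
    rw [h.T_tangentPt hK h0 hT hp, h.T_tangentPt hK h0 hT hp'] at he
    rw [h.tangentPt_inj hK h0 one_ne_zero hp hp' he]
  · intro y hy
    rw [← h.image_pos hK h0 hT] at hy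
    obtain ⟨p, hp, rfl⟩ := hy
    exact ⟨tangentPt m (-1) p, h.image_neg hK h0 hT ▸ mem_image_of_mem _ hp,
      h.T_tangentPt hK h0 hT hp⟩

end TangentParam

/-! ### An almost invariant function -/

theorem exists_bound_of_periodic {f : ℝ → ℝ} (hf : Continuous f) (hp : Function.Periodic f (2 * π)) :
    ∃ B, 0 < B ∧ ∀ θ, |f θ| ≤ B := by
  have h1 : IsCompact (range f) := hp.compact_of_continuous (by positivity) hf
  obtain ⟨B, hB⟩ := h1.isBounded.exists_norm_le
  exact ⟨max B 1, by positivity, fun θ => (hB _ ⟨θ, rfl⟩).trans (le_max_left _ _)⟩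

theorem exists_pos_bound_of_periodic {f : ℝ → ℝ} (hf : Continuous f)
    (hp : Function.Periodic f (2 * π)) (h0 : ∀ θ, 0 < f θ) : ∃ b, 0 < b ∧ ∀ θ, b ≤ f θ := by
  have h1 : IsCompact (range f) := hp.compact_of_continuous (by positivity) hf
  obtain ⟨_, ⟨θ, rfl⟩, h2⟩ := h1.exists_isLeast (range_nonempty f)
  exact ⟨f θ, h0 θ, fun t => h2 ⟨t, rfl⟩⟩

/-- Comparison of `∫₀ᵟ σ(u) sin u du` with `r (1 - cos δ)` when `σ` is close to `r`. -/
theorem abs_sub_le_of_deriv_mul_sin {H σ : ℝ → ℝ} {δ r η : ℝ} (hδ : 0 ≤ δ) (hδπ : δ ≤ π)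
    (h0 : H 0 = 0) (hH : ∀ u, HasDerivAt H (σ u * sin u) u)
    (hσ : ∀ u ∈ Icc 0 δ, |σ u - r| ≤ η) :
    |H δ - r * (1 - cos δ)| ≤ η * (1 - cos δ) := by
  have key : ∀ c : ℝ, ∀ u, HasDerivAt (fun u => H u - c * (1 - cos u)) ((σ u - c) * sin u) u := by
    intro c u
    refine ((hH u).sub (((hasDerivAt_cos u).const_sub 1).const_mul c)).congr_deriv ?_
    ring
  have hc : ∀ c : ℝ, ContinuousOn (fun u => H u - c * (1 - cos u)) (Icc 0 δ) :=
    fun c u _ => (key c u).continuousAt.continuousWithinAt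
  have hsin : ∀ u ∈ interior (Icc 0 δ), 0 ≤ sin u := fun u hu =>
    sin_nonneg_of_nonneg_of_le_pi (interior_subset hu).1 ((interior_subset hu).2.trans hδπ)
  have h1 : MonotoneOn (fun u => H u - (r - η) * (1 - cos u)) (Icc 0 δ) := by
    refine monotoneOn_of_deriv_nonneg (convex_Icc _ _) (hc _)
      (fun u _ => (key _ u).differentiableAt.differentiableWithinAt) fun u hu => ?_
    rw [(key _ u).deriv]
    have := (abs_le.1 (hσ u (interior_subset hu))).1
    exact mul_nonneg (by linarith) (hsin u hu)
  have h2 : AntitoneOn (fun u => H u - (r + η) * (1 - cos u)) (Icc 0 δ) := by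
    refine antitoneOn_of_deriv_nonpos (convex_Icc _ _) (hc _)
      (fun u _ => (key _ u).differentiableAt.differentiableWithinAt) fun u hu => ?_
    rw [(key _ u).deriv]
    have := (abs_le.1 (hσ u (interior_subset hu))).2
    exact mul_nonpos_of_nonpos_of_nonneg (by linarith) (hsin u hu)
  have a1 := h1 ⟨le_rfl, hδ⟩ ⟨hδ, le_rfl⟩ hδ
  have a2 := h2 ⟨le_rfl, hδ⟩ ⟨hδ, le_rfl⟩ hδ
  simp only [h0, cos_zero, sub_self, mul_zero] at a1 a2
  rw [abs_le]; constructor <;> nlinarith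

/-- Width of `K` transversally to the direction `uVec θ`. -/
def width (m : ℝ → ℝ × ℝ) (θ : ℝ) : ℝ := detV (uVec θ) (m (θ + π) - m θ)

/-- Coefficient of the lower order correction in `almostInv`; it is `π`-antiperiodic. It is the
value for which the error term `errE` vanishes at infinity, see `TangentParam.errE_zero`. -/
def corr (m : ℝ → ℝ × ℝ) (ρ : ℝ → ℝ) (θ : ℝ) : ℝ :=
  width m θ ^ 2 * (ρ θ - ρ (θ + π)) / 4

/-- A function of the tangent coordinates of a point `x = m θ - l • uVec θ` of the exterior which is
invariant under the outer billiard map up to an error `o(1 / l)`. The leading term `l * width` is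
invariant up to `O(1 / l)` only; the correction removes that error. The denominator `1 + l` in place
of `l` keeps it bounded near `K`. -/
def almostInv (m : ℝ → ℝ × ℝ) (ρ : ℝ → ℝ) (p : ℝ × ℝ) : ℝ :=
  p.2 * width m p.1 + corr m ρ p.1 / (1 + p.2)

/-- If `x = m θ - l • uVec θ` and `T x = m θ' - l' • uVec θ'` with `θ' = θ + π - δ`, this is
`l' * sin δ`. -/
def farF (m : ℝ → ℝ × ℝ) (θ δ : ℝ) : ℝ := detV (uVec θ) (m (θ + π - δ) - m θ)

/-- In the situation of `farF` this is `l * sin δ`. -/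
def farG (m : ℝ → ℝ × ℝ) (θ δ : ℝ) : ℝ := detV (uVec (θ - δ)) (m (θ + π - δ) - m θ)

/-- The variation of `almostInv` along one step of `T`, divided by `sin δ`, as a function of
`q = (δ, e₁, e₂)`. Here `π - δ` is the angle between the tangent directions at a point and at its
image, and `e₁`, `e₂` are the deviations of the averages of `ρ` over arcs of angular length `δ` from
`ρ (θ + π)` and `ρ θ`. -/
def errE (m : ℝ → ℝ × ℝ) (ρ : ℝ → ℝ) (θ : ℝ) (q : ℝ × ℝ × ℝ) : ℝ :=
  (width m θ * (ρ θ + q.2.2) - width m (θ - q.1) * (ρ (θ + π) + q.2.1)) / (1 + cos q.1)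
    - corr m ρ (θ - q.1) / (farF m θ q.1 + sin q.1) - corr m ρ θ / (farG m θ q.1 + sin q.1)

namespace TangentParam

variable {K : Set (ℝ × ℝ)} {m : ℝ → ℝ × ℝ} {ρ : ℝ → ℝ} {T : ℝ × ℝ → ℝ × ℝ}

theorem rho_per (h : TangentParam K m ρ) : Function.Periodic ρ (2 * π) := by
  intro θ
  have h1 : HasDerivAt m (ρ (θ + 2 * π) • uVec (θ + 2 * π)) θ := by
    have := (h.deriv (θ + 2 * π)).comp_add_const θ (2 * π)
    simpa only [h.per] using this
  have h2 := h1.unique (h.deriv θ)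
  rw [uVec_add_two_pi] at h2
  exact smul_left_injective _ (uVec_ne_zero θ) h2

theorem continuous_width (h : TangentParam K m ρ) : Continuous (width m) := by
  have := h.continuous
  unfold width detV uVec; fun_prop

theorem continuous_corr (h : TangentParam K m ρ) : Continuous (corr m ρ) := by
  have h1 := h.continuous_width
  have h2 := h.cont
  unfold corr; fun_prop

theorem width_add_pi (h : TangentParam K m ρ) (θ : ℝ) : width m (θ + π) = width m θ := by
  have e : m (θ + π + π) = m θ := by rw [add_assoc, ← two_mul, h.per]
  simp only [width, e, uVec_add_pi]
  simp [detV]; ring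

theorem corr_add_pi (h : TangentParam K m ρ) (θ : ℝ) : corr m ρ (θ + π) = -corr m ρ θ := by
  have e : ρ (θ + π + π) = ρ θ := by rw [add_assoc, ← two_mul, h.rho_per]
  simp only [corr, e, h.width_add_pi]; ring

theorem width_per (h : TangentParam K m ρ) : Function.Periodic (width m) (2 * π) := fun θ => by
  rw [two_mul, ← add_assoc, h.width_add_pi, h.width_add_pi]

theorem corr_per (h : TangentParam K m ρ) : Function.Periodic (corr m ρ) (2 * π) := fun θ => by
  rw [two_mul, ← add_assoc, h.corr_add_pi, h.corr_add_pi, neg_neg]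

theorem almostInv_per (h : TangentParam K m ρ) (θ l : ℝ) (k : ℤ) :
    almostInv m ρ (θ + k * (2 * π), l) = almostInv m ρ (θ, l) := by
  simp only [almostInv]
  rw [h.width_per.int_mul k θ, h.corr_per.int_mul k θ]

/-- The choice of `corr` makes the limit of the error at infinity vanish. -/
theorem errE_zero (h : TangentParam K m ρ) (θ : ℝ) : errE m ρ θ 0 = 0 := by
  have hw : 0 < width m θ := h.width_pos θ
  have e1 : farF m θ 0 = width m θ := by simp [farF, width]
  have e2 : farG m θ 0 = width m θ := by simp [farG, width]
  simp only [errE, Prod.fst_zero, Prod.snd_zero, e1, e2, sub_zero, cos_zero, sin_zero, add_zero,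
    corr]
  field_simp
  ring

/-- Continuity and compactness make the vanishing in `errE_zero` uniform in `θ`. -/
theorem errE_small (h : TangentParam K m ρ) {ε : ℝ} (hε : 0 < ε) :
    ∃ η, 0 < η ∧ ∀ θ ∈ Icc 0 (2 * π), ∀ q : ℝ × ℝ × ℝ, ‖q‖ < η → |errE m ρ θ q| < ε := by
  have hc1 := h.continuous_width
  have hc2 := h.continuous_corr
  have hc3 := h.cont
  have hc4 := h.continuous
  have key : ∀ θ ∈ Icc 0 (2 * π), ∀ᶠ z : ℝ × (ℝ × ℝ × ℝ) in nhds (θ, 0),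
      |errE m ρ z.1 z.2| < ε := by
    intro θ _
    have hw : 0 < width m θ := h.width_pos θ
    have hcont : ContinuousAt (fun z : ℝ × (ℝ × ℝ × ℝ) => |errE m ρ z.1 z.2|) (θ, 0) := by
      unfold errE
      refine ContinuousAt.abs (((ContinuousAt.div ?_ ?_ ?_).sub (ContinuousAt.div ?_ ?_ ?_)).sub
        (ContinuousAt.div ?_ ?_ ?_))
      · fun_prop
      · fun_prop
      · norm_num
      · fun_prop
      · unfold farF detV uVec; fun_prop
      · have e1 : farF m θ 0 = width m θ := by simp [farF, width]
        simp [e1, hw.ne']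
      · fun_prop
      · unfold farG detV uVec; fun_prop
      · have e1 : farG m θ 0 = width m θ := by simp [farG, width]
        simp [e1, hw.ne']
    have := hcont.eventually_lt (g := fun _ => ε) continuousAt_const (by simpa [h.errE_zero θ] using hε)
    exact this
  have := isCompact_Icc.eventually_forall_of_forall_eventually (x₀ := (0 : ℝ × ℝ × ℝ))
    (P := fun (q : ℝ × ℝ × ℝ) θ => |errE m ρ θ q| < ε) (K := Icc 0 (2 * π)) (by
      intro θ hθ
      have := key θ hθ
      rw [nhds_prod_eq] at this ⊢
      exact Filter.eventually_swap_iff.1 this)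
  obtain ⟨η, hη, hb⟩ := Metric.eventually_nhds_iff.1 this
  exact ⟨η, hη, fun θ hθ q hq => hb (by simpa [dist_zero_right] using hq) θ hθ⟩

/-- `farF` differs from its value at `δ = 0` by the integral of `ρ (θ + π - u) * sin u` over `[0, δ]`. -/
theorem farF_est (h : TangentParam K m ρ) {θ δ η : ℝ} (hδ : 0 ≤ δ) (hδπ : δ ≤ π)
    (hη : ∀ u ∈ Icc 0 δ, |ρ (θ + π - u) - ρ (θ + π)| ≤ η) :
    |width m θ - farF m θ δ - ρ (θ + π) * (1 - cos δ)| ≤ η * (1 - cos δ) := by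
  have := abs_sub_le_of_deriv_mul_sin (H := fun u => width m θ - farF m θ u)
    (σ := fun u => ρ (θ + π - u)) hδ hδπ (by simp [farF, width]) ?_ hη
  · exact this
  · intro u
    have h1 := (h.deriv_fst (θ + π - u)).comp_const_sub (θ + π) u
    have h2 := (h.deriv_snd (θ + π - u)).comp_const_sub (θ + π) u
    have h3 := (((h2.sub_const (m θ).2).const_mul (cos θ)).sub
      ((h1.sub_const (m θ).1).const_mul (sin θ))).const_sub (width m θ)
    refine h3.congr_deriv ?_
    have e : uVec (θ + π - u) = -uVec (θ - u) := by
      rw [← uVec_add_pi]; congr 1; ring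
    have e' : sin u = sin θ * cos (θ - u) - cos θ * sin (θ - u) := by
      rw [← sin_sub]; congr 1; ring
    rw [e, e']
    simp [uVec]; ring

/-- `farG` differs from `width m (θ - δ)` by an integral of values of `ρ` near `θ` against the sine. -/
theorem farG_est (h : TangentParam K m ρ) {θ δ η : ℝ} (hδ : 0 ≤ δ) (hδπ : δ ≤ π)
    (hη : ∀ u ∈ Icc 0 δ, |ρ (θ - u) - ρ θ| ≤ η) :
    |width m (θ - δ) - farG m θ δ - ρ θ * (1 - cos δ)| ≤ η * (1 - cos δ) := by
  have := abs_sub_le_of_deriv_mul_sin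
    (H := fun u => detV (uVec (θ - δ)) (m (θ - δ + u) - m (θ - δ)))
    (σ := fun u => ρ (θ - δ + u)) (r := ρ θ) (η := η) hδ hδπ (by simp [detV]) ?_ ?_
  · convert this using 3
    have e : θ - δ + π = θ + π - δ := by ring
    simp only [width, farG, e, sub_add_cancel]
    simp [detV]; ring
  · intro u
    have h1 := (h.deriv_fst (θ - δ + u)).comp_const_add (θ - δ) u
    have h2 := (h.deriv_snd (θ - δ + u)).comp_const_add (θ - δ) u
    have h3 := (((h2.sub_const (m (θ - δ)).2).const_mul (cos (θ - δ))).sub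
      ((h1.sub_const (m (θ - δ)).1).const_mul (sin (θ - δ))))
    refine h3.congr_deriv ?_
    have e' : sin u = sin (θ - δ + u) * cos (θ - δ) - cos (θ - δ + u) * sin (θ - δ) := by
      rw [← sin_sub]; congr 1; ring
    rw [e']
    simp [uVec]; ring
  · intro u hu
    have := hη (δ - u) ⟨by linarith [hu.2], by linarith [hu.1]⟩
    convert this using 4
    ring

/-- Exact expression of the variation of `almostInv` along one step in terms of `errE`. -/
theorem almostInv_step (h : TangentParam K m ρ) {θ δ l l' η : ℝ} (hδ : 0 < δ) (hδπ : δ < π)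
    (hl : 0 < l) (hl' : 0 < l')
    (hF : l' * sin δ = farF m θ δ) (hG : l * sin δ = farG m θ δ)
    (hη : ∀ t ∈ Icc (-π) (3 * π), ∀ u ∈ Icc 0 δ, |ρ (t - u) - ρ t| ≤ η)
    (hθ : θ ∈ Icc 0 (2 * π)) :
    ∃ e₁ e₂ : ℝ, |e₁| ≤ η ∧ |e₂| ≤ η ∧
      almostInv m ρ (θ + π - δ, l') - almostInv m ρ (θ, l) = sin δ * errE m ρ θ (δ, e₁, e₂) := by
  have hs : 0 < sin δ := sin_pos_of_pos_of_lt_pi hδ hδπ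
  have hc : 0 < 1 - cos δ := by
    have := cos_lt_cos_of_nonneg_of_le_pi le_rfl hδπ.le hδ
    rw [cos_zero] at this; linarith
  have hsc := sin_sq_add_cos_sq δ
  have hc' : 0 < 1 + cos δ := by nlinarith
  have hπ := pi_pos
  have f1 := h.farF_est (θ := θ) hδ.le hδπ.le (hη (θ + π) ⟨by linarith [hθ.1], by linarith [hθ.2]⟩)
  have f2 := h.farG_est (θ := θ) hδ.le hδπ.le (hη θ ⟨by linarith [hθ.1], by linarith [hθ.2]⟩)
  refine ⟨(width m θ - farF m θ δ) / (1 - cos δ) - ρ (θ + π),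
    (width m (θ - δ) - farG m θ δ) / (1 - cos δ) - ρ θ, ?_, ?_, ?_⟩
  · have : (width m θ - farF m θ δ) / (1 - cos δ) - ρ (θ + π) =
        (width m θ - farF m θ δ - ρ (θ + π) * (1 - cos δ)) / (1 - cos δ) := by field_simp
    rw [this, abs_div, abs_of_pos hc, div_le_iff₀ hc]; exact f1
  · have : (width m (θ - δ) - farG m θ δ) / (1 - cos δ) - ρ θ =
        (width m (θ - δ) - farG m θ δ - ρ θ * (1 - cos δ)) / (1 - cos δ) := by field_simp
    rw [this, abs_div, abs_of_pos hc, div_le_iff₀ hc]; exact f2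
  · have e : θ + π - δ = (θ - δ) + π := by ring
    have hF' : l' = farF m θ δ / sin δ := by rw [← hF]; field_simp
    have hG' : l = farG m θ δ / sin δ := by rw [← hG]; field_simp
    have hF0 : 0 < farF m θ δ := hF ▸ mul_pos hl' hs
    have hG0 : 0 < farG m θ δ := hG ▸ mul_pos hl hs
    simp only [almostInv, errE, e, h.width_add_pi, h.corr_add_pi]
    rw [hF', hG', add_sub_cancel, add_sub_cancel]
    generalize farF m θ δ = F at *
    generalize farG m θ δ = G at *
    generalize width m θ = W at *
    generalize width m (θ - δ) = W' at *
    generalize corr m ρ θ = C at *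
    generalize corr m ρ (θ - δ) = C' at *
    have hid : (1 - cos δ) * (1 + cos δ) = sin δ ^ 2 := by linarith
    have a1 : sin δ * ((W * ((W' - G) / (1 - cos δ)) - W' * ((W - F) / (1 - cos δ))) /
        (1 + cos δ)) = F / sin δ * W' - G / sin δ * W := by
      have : (W * ((W' - G) / (1 - cos δ)) - W' * ((W - F) / (1 - cos δ))) / (1 + cos δ)
          = (F * W' - G * W) / ((1 - cos δ) * (1 + cos δ)) := by field_simp; ring
      rw [this, hid]; field_simp
    have a2 : -C' / (1 + F / sin δ) = - (sin δ * (C' / (F + sin δ))) := by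
      have : 0 < F + sin δ := by positivity
      have : 0 < 1 + F / sin δ := by positivity
      field_simp
      ring
    have a3 : C / (1 + G / sin δ) = sin δ * (C / (G + sin δ)) := by
      have : 0 < G + sin δ := by positivity
      have : 0 < 1 + G / sin δ := by positivity
      field_simp
      ring
    rw [a2, a3]
    linear_combination -a1

theorem exists_coord_bound (h : TangentParam K m ρ) :
    ∃ B, 0 < B ∧ ∀ θ, |(m θ).1| ≤ B ∧ |(m θ).2| ≤ B := by
  obtain ⟨B₁, h1, h1'⟩ := exists_bound_of_periodic (f := fun θ => (m θ).1)
    (continuous_fst.comp h.continuous) (fun θ => by simp only [h.per])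
  obtain ⟨B₂, h2, h2'⟩ := exists_bound_of_periodic (f := fun θ => (m θ).2)
    (continuous_snd.comp h.continuous) (fun θ => by simp only [h.per])
  exact ⟨max B₁ B₂, by positivity, fun θ =>
    ⟨(h1' θ).trans (le_max_left _ _), (h2' θ).trans (le_max_right _ _)⟩⟩

/-- The two tangent lengths at a point of the exterior differ by a bounded amount. -/
theorem abs_sub_le {B : ℝ} (hB0 : 0 < B)
    (hB : ∀ θ, |(m θ).1| ≤ B ∧ |(m θ).2| ≤ B) {θ θ' l l' : ℝ} (hl : 0 < l) (hl' : 0 < l')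
    (he : m θ + l • uVec θ = m θ' - l' • uVec θ') : |l' - l| ≤ 3 * B := by
  have e1 := congrArg Prod.fst he
  have e2 := congrArg Prod.snd he
  simp [uVec] at e1 e2
  have b1 := abs_le.1 (hB θ).1
  have b2 := abs_le.1 (hB θ).2
  have b3 := abs_le.1 (hB θ').1
  have b4 := abs_le.1 (hB θ').2
  have d1 : ((m θ').1 - (m θ).1) ^ 2 ≤ (2 * B) ^ 2 := by
    apply sq_le_sq' <;> linarith
  have d2 : ((m θ').2 - (m θ).2) ^ 2 ≤ (2 * B) ^ 2 := by
    apply sq_le_sq' <;> linarith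
  have f1 : (m θ').1 - (m θ).1 = l * cos θ + l' * cos θ' := by linarith
  have f2 : (m θ').2 - (m θ).2 = l * sin θ + l' * sin θ' := by linarith
  rw [f1] at d1
  rw [f2] at d2
  have c1 := cos_sq_add_sin_sq θ
  have c2 := cos_sq_add_sin_sq θ'
  have c3 : -1 ≤ cos θ * cos θ' + sin θ * sin θ' := by
    rw [← cos_sub]; exact neg_one_le_cos _
  have : (l' - l) ^ 2 ≤ (3 * B) ^ 2 := by
    have h1 := mul_le_mul_of_nonneg_left c3 (mul_pos hl hl').le
    have h2 : (l * cos θ + l' * cos θ') ^ 2 + (l * sin θ + l' * sin θ') ^ 2 =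
        l ^ 2 + l' ^ 2 + 2 * (l * l' * (cos θ * cos θ' + sin θ * sin θ')) := by
      linear_combination l ^ 2 * c1 + l' ^ 2 * c2
    nlinarith
  exact abs_le_of_sq_le_sq this (by positivity)

/-- The second tangent direction at a point far away is almost opposite to the first. -/
theorem exists_defect (h : TangentParam K m ρ) (hK : IsCompact K) (h0 : (0 : ℝ × ℝ) ∈ interior K)
    {B : ℝ} (hB : ∀ θ, |(m θ).1| ≤ B ∧ |(m θ).2| ≤ B) {θ θ' l l' : ℝ} (hl : 0 < l) (hl' : 0 < l')
    (he : m θ + l • uVec θ = m θ' - l' • uVec θ') :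
    ∃ δ, 0 < δ ∧ δ < π ∧ (∃ k : ℤ, θ' = θ + π - δ + k * (2 * π)) ∧
      l' * sin δ = farF m θ δ ∧ l * sin δ = farG m θ δ ∧ l * (1 - cos δ) ≤ 8 * B := by
  obtain ⟨k, hk, -⟩ := existsUnique_add_zsmul_mem_Ioc (a := 2 * π) (by positivity)
    (θ + π - θ') (-π)
  set δ := θ + π - θ' + k • (2 * π) with hδ
  have hθ' : θ' = θ + π - δ + k * (2 * π) := by rw [hδ, zsmul_eq_mul]; ring
  have hu : uVec θ' = -uVec (θ - δ) := by
    have : Function.Periodic uVec (2 * π) := uVec_add_two_pi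
    rw [hθ', this.int_mul k, ← uVec_add_pi]; congr 1; ring
  have hm : m θ' = m (θ + π - δ) := by rw [hθ', h.per_int]
  have hD : m (θ + π - δ) - m θ = l • uVec θ - l' • uVec (θ - δ) := by
    rw [hu, hm, smul_neg, sub_neg_eq_add] at he
    rw [← sub_eq_zero] at he ⊢
    rw [← neg_eq_zero, ← he]; abel
  have hs1 : sin δ = sin θ * cos (θ - δ) - cos θ * sin (θ - δ) := by
    rw [← sin_sub]; congr 1; ring
  have hF : l' * sin δ = farF m θ δ := by
    rw [farF, hD, hs1]; simp [detV, uVec]; ring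
  have hG : l * sin δ = farG m θ δ := by
    rw [farG, hD, hs1]; simp [detV, uVec]; ring
  have hsup := h.support hK h0 θ
  have hmem := h.mem hK.isClosed (θ + π - δ)
  have hs0 : 0 ≤ sin δ := by
    have := hsup.1 _ hmem
    change 0 ≤ farF m θ δ at this
    rw [← hF] at this
    exact nonneg_of_mul_nonneg_right this hl'
  have hsne : sin δ ≠ 0 := by
    intro hz
    have heq : m (θ + π - δ) = m θ := by
      apply hsup.2 _ hmem
      change farF m θ δ = 0
      rw [← hF, hz, mul_zero]
    -- then the two opposite tangent directions at the same point contradict `0 ∈ interior K`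
    rw [heq, sub_self, eq_comm, sub_eq_zero] at hD
    have d1 := h.detpos θ
    have d2 := h.detpos (θ + π - δ)
    have e : uVec (θ + π - δ) = -uVec (θ - δ) := by
      rw [← uVec_add_pi]; congr 1; ring
    have d3 : l * detV (m θ) (uVec θ) = l' * detV (m θ) (uVec (θ - δ)) := by
      have := congrArg (detV (m θ)) hD
      simp only [detV, Prod.smul_fst, Prod.smul_snd, smul_eq_mul] at this ⊢
      linarith
    have d4 : detV (m θ) (uVec (θ - δ)) < 0 := by
      rw [heq, e] at d2
      simp only [detV, Prod.fst_neg, Prod.snd_neg] at d2 ⊢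
      linarith
    nlinarith [mul_pos hl d1, mul_neg_of_pos_of_neg hl' d4]
  have hspos : 0 < sin δ := lt_of_le_of_ne hs0 (Ne.symm hsne)
  have hδ0 : 0 < δ := by
    by_contra! hc
    exact absurd (sin_nonpos_of_nonpos_of_neg_pi_le hc hk.1.le) (not_le.2 hspos)
  have hδπ : δ < π := by
    refine lt_of_le_of_ne (by linarith [hk.2]) fun hc => ?_
    rw [hc, sin_pi] at hspos; exact lt_irrefl _ hspos
  refine ⟨δ, hδ0, hδπ, ⟨k, hθ'⟩, hF, hG, ?_⟩
  have e1 := congrArg Prod.fst hD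
  have e2 := congrArg Prod.snd hD
  simp only [Prod.fst_sub, Prod.snd_sub, Prod.smul_fst, Prod.smul_snd, uVec, smul_eq_mul] at e1 e2
  have b1 := abs_le.1 (hB θ).1
  have b2 := abs_le.1 (hB θ).2
  have b3 := abs_le.1 (hB (θ + π - δ)).1
  have b4 := abs_le.1 (hB (θ + π - δ)).2
  have hcd : cos δ = cos θ * cos (θ - δ) + sin θ * sin (θ - δ) := by
    rw [← cos_sub]; congr 1; ring
  have c1 := cos_sq_add_sin_sq θ
  have c2 := cos_sq_add_sin_sq (θ - δ)
  set X := (m (θ + π - δ)).1 - (m θ).1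
  set Y := (m (θ + π - δ)).2 - (m θ).2
  have key : (l + l') * (1 - cos δ) =
      X * (cos θ - cos (θ - δ)) + Y * (sin θ - sin (θ - δ)) := by
    rw [e1, e2, hcd]; linear_combination (-l) * c1 - l' * c2
  have hX : |X| ≤ 2 * B := abs_le.2 ⟨by linarith, by linarith⟩
  have hY : |Y| ≤ 2 * B := abs_le.2 ⟨by linarith, by linarith⟩
  have t1 : |cos θ - cos (θ - δ)| ≤ 2 :=
    (abs_sub _ _).trans (by linarith [abs_cos_le_one θ, abs_cos_le_one (θ - δ)])
  have t2 : |sin θ - sin (θ - δ)| ≤ 2 :=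
    (abs_sub _ _).trans (by linarith [abs_sin_le_one θ, abs_sin_le_one (θ - δ)])
  have p1 := (le_abs_self _).trans_eq (abs_mul X (cos θ - cos (θ - δ)))
  have p2 := (le_abs_self _).trans_eq (abs_mul Y (sin θ - sin (θ - δ)))
  have q1 := mul_le_mul hX t1 (abs_nonneg _) (by linarith [abs_nonneg X])
  have q2 := mul_le_mul hY t2 (abs_nonneg _) (by linarith [abs_nonneg Y])
  have : 0 ≤ l' * (1 - cos δ) := mul_nonneg hl'.le (by linarith [cos_le_one δ])
  nlinarith

/-- `almostInv` is invariant under the outer billiard map up to `o(1 / l)`. -/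
theorem almostInv_T (h : TangentParam K m ρ) (hK : IsCompact K) (h0 : (0 : ℝ × ℝ) ∈ interior K)
    {ε : ℝ} (hε : 0 < ε) :
    ∃ L, 0 < L ∧ ∀ θ ∈ Icc 0 (2 * π), ∀ θ' l l' : ℝ, L ≤ l → 0 < l' →
      m θ + l • uVec θ = m θ' - l' • uVec θ' →
      |almostInv m ρ (θ', l') - almostInv m ρ (θ, l)| ≤ ε / l := by
  obtain ⟨B, hB0, hB⟩ := h.exists_coord_bound
  obtain ⟨η, hη, hE⟩ := h.errE_small (ε := ε / (4 * B)) (by positivity)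
  have huc := isCompact_Icc.uniformContinuousOn_of_continuous
    (h.cont.continuousOn (s := Icc (-2 * π) (3 * π)))
  obtain ⟨τ, hτ, hρ⟩ := Metric.uniformContinuousOn_iff.1 huc (η / 2) (by positivity)
  -- smallness of the defect follows from smallness of `1 - cos δ`
  set δ₀ := min (min (τ / 2) (η / 2)) (π / 2) with hδ₀
  have hπ := pi_pos
  have hδ₀0 : 0 < δ₀ := by positivity
  have hδ₀π : δ₀ ≤ π / 2 := min_le_right _ _
  have hcos : 0 < 1 - cos δ₀ := by
    have := cos_lt_cos_of_nonneg_of_le_pi le_rfl (by linarith) hδ₀0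
    rw [cos_zero] at this; linarith
  refine ⟨8 * B / (1 - cos δ₀), by positivity, fun θ hθ θ' l l' hl hl' he => ?_⟩
  have hl0 : 0 < l := lt_of_lt_of_le (by positivity) hl
  obtain ⟨δ, hδ0, hδπ, ⟨k, rfl⟩, hF, hG, hsm⟩ := h.exists_defect hK h0 hB hl0 hl' he
  have hδs : δ ≤ δ₀ := by
    by_contra! hc
    have := cos_lt_cos_of_nonneg_of_le_pi hδ₀0.le hδπ.le hc
    have h1 := (div_le_iff₀ hcos).1 hl
    nlinarith
  have hδτ : δ < τ := by
    have := (min_le_left _ _).trans (min_le_left _ _) |>.trans_eq' hδ₀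
    linarith
  have hδη : δ < η := by
    have := (min_le_left _ _).trans (min_le_right _ _) |>.trans_eq' hδ₀
    linarith
  obtain ⟨e₁, e₂, h1, h2, h3⟩ := h.almostInv_step hδ0 hδπ hl0 hl' hF hG (η := η / 2) (by
    intro t ht u hu
    have := hρ (t - u) ⟨by linarith [ht.1, hu.2], by linarith [ht.2, hu.1]⟩ t
      ⟨by linarith [ht.1], ht.2⟩ (by
        rw [Real.dist_eq, sub_sub_cancel_left, abs_neg, abs_of_nonneg hu.1]
        linarith [hu.2])
    rw [Real.dist_eq] at this
    exact this.le) hθ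
  have hE' := hE θ hθ (δ, e₁, e₂) (by
    simp only [Prod.norm_def, Real.norm_eq_abs, max_lt_iff]
    exact ⟨by rwa [abs_of_pos hδ0], by linarith, by linarith⟩)
  rw [h.almostInv_per, h3, abs_mul]
  have hs : 0 < sin δ := sin_pos_of_pos_of_lt_pi hδ0 hδπ
  have hsB : sin δ ≤ 4 * B / l := by
    rw [le_div_iff₀ hl0, mul_comm, hG]
    have b1 := abs_le.1 (hB θ).1
    have b2 := abs_le.1 (hB θ).2
    have b3 := abs_le.1 (hB (θ + π - δ)).1
    have b4 := abs_le.1 (hB (θ + π - δ)).2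
    simp only [farG, detV, uVec, Prod.fst_sub, Prod.snd_sub]
    set X := (m (θ + π - δ)).1 - (m θ).1
    set Y := (m (θ + π - δ)).2 - (m θ).2
    have hX : |X| ≤ 2 * B := abs_le.2 ⟨by linarith, by linarith⟩
    have hY : |Y| ≤ 2 * B := abs_le.2 ⟨by linarith, by linarith⟩
    have p1 := (le_abs_self _).trans_eq (abs_mul (cos (θ - δ)) Y)
    have p2 := (neg_le_abs _).trans_eq (abs_mul (sin (θ - δ)) X)
    have q1 := mul_le_mul (abs_cos_le_one (θ - δ)) hY (abs_nonneg _) zero_le_one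
    have q2 := mul_le_mul (abs_sin_le_one (θ - δ)) hX (abs_nonneg _) zero_le_one
    linarith
  rw [abs_of_pos hs]
  calc sin δ * |errE m ρ θ (δ, e₁, e₂)| ≤ (4 * B / l) * (ε / (4 * B)) :=
        mul_le_mul hsB hE'.le (abs_nonneg _) (by positivity)
    _ = ε / l := by field_simp

end TangentParam

/-! ### Asymptotically invariant cutoffs -/

theorem volume_real_closedBall_plane {R : ℝ} (hR : 0 ≤ R) :
    volume.real (Metric.closedBall (0 : ℝ × ℝ) R) = (2 * R) ^ 2 := by
  rw [show (0 : ℝ × ℝ) = ((0 : ℝ), (0 : ℝ)) from rfl, ← closedBall_prod_same,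
    Measure.volume_eq_prod, measureReal_prod_prod, Real.volume_real_closedBall hR]
  ring

/-- The piecewise linear profile equal to `1` on `(-∞, 1]` and to `0` on `[2, ∞)`. -/
def profile (t : ℝ) : ℝ := max 0 (min 1 (2 - t))

theorem continuous_profile : Continuous profile := by unfold profile; fun_prop

theorem profile_nonneg (t : ℝ) : 0 ≤ profile t := le_max_left _ _

theorem profile_le_one (t : ℝ) : profile t ≤ 1 := max_le zero_le_one (min_le_left _ _)

theorem profile_of_le {t : ℝ} (h : t ≤ 1) : profile t = 1 := by
  rw [profile, min_eq_left (by linarith), max_eq_right zero_le_one]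

theorem profile_of_ge {t : ℝ} (h : 2 ≤ t) : profile t = 0 :=
  max_eq_left ((min_le_right _ _).trans (by linarith))

theorem abs_profile_sub_le (s t : ℝ) : |profile s - profile t| ≤ |s - t| := by
  unfold profile
  refine (abs_max_sub_max_le_max _ _ _ _).trans ?_
  rw [sub_self, abs_zero, max_eq_right (abs_nonneg _)]
  refine (abs_min_sub_min_le_max _ _ _ _).trans ?_
  rw [sub_self, abs_zero, max_eq_right (abs_nonneg _), sub_sub_sub_cancel_left, abs_sub_comm]

open Classical in
/-- The tangent coordinates `(θ, l)` of a point `x = m θ - l • uVec θ` of the exterior of `K`, with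
value `0` on `K`. -/
def tangentInv (K : Set (ℝ × ℝ)) (m : ℝ → ℝ × ℝ) : ℝ × ℝ → ℝ × ℝ :=
  Kᶜ.piecewise (Function.invFunOn (tangentPt m (-1)) tangentDom) 0

namespace TangentParam

variable {K : Set (ℝ × ℝ)} {m : ℝ → ℝ × ℝ} {ρ : ℝ → ℝ} {T : ℝ × ℝ → ℝ × ℝ}

theorem tangentInv_mem (h : TangentParam K m ρ) (hK : IsCompact K) (h0 : (0 : ℝ × ℝ) ∈ interior K)
    (hT : IsOuterBilliard K T) {x : ℝ × ℝ} (hx : x ∉ K) :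
    tangentInv K m x ∈ tangentDom ∧ tangentPt m (-1) (tangentInv K m x) = x := by
  have hx' : x ∈ tangentPt m (-1) '' tangentDom := by rwa [h.image_neg hK h0 hT]
  have e : tangentInv K m x = Function.invFunOn (tangentPt m (-1)) tangentDom x := by
    classical exact piecewise_eq_of_mem _ _ _ hx
  rw [e]
  exact ⟨Function.invFunOn_mem hx', Function.invFunOn_eq hx'⟩

theorem measurable_tangentInv (h : TangentParam K m ρ) (hK : IsCompact K)
    (h0 : (0 : ℝ × ℝ) ∈ interior K) (hT : IsOuterBilliard K T) : Measurable (tangentInv K m) := by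
  have hinj := h.tangentPt_inj hK h0 (s := -1) (by norm_num)
  intro B hB
  have : tangentInv K m ⁻¹' B =
      tangentPt m (-1) '' (tangentDom ∩ B) ∪ (K ∩ {_x | (0 : ℝ × ℝ) ∈ B}) := by
    ext x
    by_cases hx : x ∈ K
    · have e : tangentInv K m x = 0 := by
        classical exact piecewise_eq_of_notMem _ _ _ (by simpa using hx)
      have e' : x ∉ tangentPt m (-1) '' (tangentDom ∩ B) := fun hx' => by
        have : x ∈ Kᶜ := h.image_neg hK h0 hT ▸ image_mono inter_subset_left hx'
        exact this hx
      simp [e, hx, e', mem_preimage]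
    · obtain ⟨h1, h2⟩ := h.tangentInv_mem hK h0 hT hx
      simp only [mem_preimage, mem_union, mem_inter_iff, hx, false_and, or_false]
      constructor
      · exact fun hb => ⟨_, ⟨h1, hb⟩, h2⟩
      · rintro ⟨p, ⟨hp, hb⟩, hpx⟩
        rwa [hinj h1 hp (h2.trans hpx.symm)]
  rw [this]
  refine MeasurableSet.union ?_ (hK.isClosed.measurableSet.inter (MeasurableSet.const _))
  exact MeasurableSet.image_of_continuousOn_injOn (measurableSet_tangentDom.inter hB)
    (h.continuous_tangentPt (-1)).continuousOn (hinj.mono inter_subset_left)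

/-- Cutoff functions exhausting the plane that are asymptotically invariant in `L¹`. The `n`-th one
is `profile (g / (n + 1))` for the almost invariant function `g`: it varies only where `|x|` is of
order `n`, on a region of area `O(n²)`, and there changes by `o(1 / n²)` under the map. A cutoff by
the distance to `K` would not do, since `T` moves points by distances of order `|x|`. -/
theorem exists_cutoff (h : TangentParam K m ρ) (hK : IsCompact K)
    (h0 : (0 : ℝ × ℝ) ∈ interior K) (hT : IsOuterBilliard K T) :
    ∃ χ : ℕ → ℝ × ℝ → ℝ, (∀ n, Measurable (χ n)) ∧ (∀ n x, 0 ≤ χ n x) ∧ (∀ n x, χ n x ≤ 1) ∧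
      (∀ n, Integrable (χ n) (volume.restrict Kᶜ)) ∧
      (∀ x, Filter.Tendsto (fun n => χ n x) Filter.atTop (nhds 1)) ∧
      Filter.Tendsto (fun n => ∫ x in Kᶜ, |χ n (extT K T x) - χ n x|) Filter.atTop (nhds 0) := by
  obtain ⟨B, hB0, hB⟩ := h.exists_coord_bound
  obtain ⟨w₁, hw1, hw1'⟩ := exists_bound_of_periodic h.continuous_width h.width_per
  obtain ⟨w₀, hw0, hw0'⟩ :=
    exists_pos_bound_of_periodic h.continuous_width h.width_per h.width_pos
  obtain ⟨c, hc0, hc⟩ := exists_bound_of_periodic h.continuous_corr h.corr_per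
  set g : ℝ × ℝ → ℝ := fun x => almostInv m ρ (tangentInv K m x) with hg
  have hgm : Measurable g := by
    have h1 := h.continuous_width
    have h2 := h.continuous_corr
    have : Measurable (almostInv m ρ) := by
      unfold almostInv
      have := h1.measurable
      have := h2.measurable
      fun_prop
    exact this.comp (h.measurable_tangentInv hK h0 hT)
  have hcorr : ∀ θ l : ℝ, 0 < l → |corr m ρ θ / (1 + l)| ≤ c := fun θ l hl => by
    rw [abs_div, abs_of_pos (by linarith : 0 < 1 + l), div_le_iff₀ (by linarith)]
    nlinarith [hc θ]
  have hup : ∀ θ l : ℝ, 0 < l → almostInv m ρ (θ, l) ≤ w₁ * l + c := fun θ l hl => by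
    have h1 := (abs_le.1 (hcorr θ l hl)).2
    have h2 := (abs_le.1 (hw1' θ)).2
    simp only [almostInv]; nlinarith
  have hlow : ∀ θ l : ℝ, 0 < l → w₀ * l - c ≤ almostInv m ρ (θ, l) := fun θ l hl => by
    have h1 := (abs_le.1 (hcorr θ l hl)).1
    have h2 := hw0' θ
    simp only [almostInv]; nlinarith
  have hnorm : ∀ θ l : ℝ, 0 < l → ‖m θ - l • uVec θ‖ ≤ B + l := fun θ l hl => by
    have h1 : ‖m θ‖ ≤ B := by
      rw [Prod.norm_def]; exact max_le (hB θ).1 (hB θ).2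
    have h2 : ‖uVec θ‖ ≤ 1 := by
      rw [Prod.norm_def]; exact max_le (abs_cos_le_one θ) (abs_sin_le_one θ)
    have h3 : ‖l • uVec θ‖ ≤ l := by
      rw [norm_smul, Real.norm_eq_abs, abs_of_pos hl]; nlinarith
    exact (norm_sub_le _ _).trans (add_le_add h1 h3)
  -- coordinates of a point and of its image
  have hco : ∀ x ∉ K, ∃ θ l : ℝ, θ ∈ Icc 0 (2 * π) ∧ 0 < l ∧ x = m θ - l • uVec θ ∧
      g x = almostInv m ρ (θ, l) ∧ T x = m θ + l • uVec θ := fun x hx => by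
    obtain ⟨h1, h2⟩ := h.tangentInv_mem hK h0 hT hx
    have e : x = m (tangentInv K m x).1 - (tangentInv K m x).2 • uVec (tangentInv K m x).1 := by
      conv_lhs => rw [← h2]
      simp [tangentPt, sub_eq_add_neg]
    refine ⟨(tangentInv K m x).1, (tangentInv K m x).2, Ico_subset_Icc_self h1.1, h1.2, e, rfl, ?_⟩
    conv_lhs => rw [e]
    exact h.T_apply hK h0 hT h1.2
  -- beyond radius `C * N` the function `g` is at least `2 * N`, both at a point and at its image
  set C := (2 + c) / w₀ + 3 * B + B with hC
  have hC0 : 0 < C := by positivity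
  have hfar : ∀ N : ℝ, 1 ≤ N → ∀ l : ℝ, C * N - B ≤ l → 2 * N ≤ w₀ * (l - 3 * B) - c := by
    intro N hN l hl
    have e : w₀ * (C * N) = (2 + c) * N + w₀ * (3 * B * N) + w₀ * (B * N) := by
      rw [hC]; field_simp
    have h1 : w₀ * (C * N - B) ≤ w₀ * l := mul_le_mul_of_nonneg_left hl hw0.le
    have h2 := mul_pos hw0 hB0
    nlinarith
  set χ : ℕ → ℝ × ℝ → ℝ := fun n x => profile (g x / (n + 1)) with hχ
  have hχm : ∀ n, Measurable (χ n) := fun n =>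
    continuous_profile.measurable.comp (hgm.div_const _)
  have hχfar : ∀ n : ℕ, ∀ x ∉ K, C * (n + 1) < ‖x‖ → χ n x = 0 := by
    intro n x hx hxn
    obtain ⟨θ, l, -, hl, rfl, hgx, -⟩ := hco x hx
    have h1 := hnorm θ l hl
    have h2 := hlow θ l hl
    have h3 := hfar (n + 1) (by simp) l (by linarith)
    have : 0 ≤ w₀ * (3 * B) := by positivity
    refine profile_of_ge ?_
    rw [le_div_iff₀ (by positivity), hgx]
    linarith
  have hball : ∀ (R b : ℝ), Integrable ((Metric.closedBall (0 : ℝ × ℝ) R).indicator fun _ => b)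
      (volume.restrict Kᶜ) := fun R b =>
    ((integrableOn_const (μ := volume) (C := b)
      (isCompact_closedBall (0 : ℝ × ℝ) R).measure_lt_top.ne).integrable_indicator
        Metric.isClosed_closedBall.measurableSet).restrict
  refine ⟨χ, hχm, fun n x => profile_nonneg _, fun n x => profile_le_one _, ?_, ?_, ?_⟩
  · intro n
    refine (hball (C * (n + 1)) 1).mono' (hχm n).aestronglyMeasurable ?_
    filter_upwards [ae_restrict_mem hK.isClosed.measurableSet.compl] with x hx
    rw [Real.norm_eq_abs, abs_of_nonneg (profile_nonneg _)]
    by_cases hxn : ‖x‖ ≤ C * (n + 1)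
    · rw [indicator_of_mem (by simpa using hxn)]; exact profile_le_one _
    · refine (hχfar n x hx (not_le.1 hxn)).le.trans ?_
      exact indicator_nonneg (fun _ _ => zero_le_one) _
  · intro x
    obtain ⟨n₀, hn₀⟩ := exists_nat_gt (g x)
    refine tendsto_const_nhds.congr' ?_
    filter_upwards [Filter.eventually_ge_atTop n₀] with n hn
    refine (profile_of_le ?_).symm
    rw [div_le_one (by positivity)]
    have : (n₀ : ℝ) ≤ n := by exact_mod_cast hn
    linarith
  · rw [Metric.tendsto_atTop]
    intro ε hε
    set ε' := ε / (16 * w₁ * C ^ 2) with hε'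
    have hε'0 : 0 < ε' := by positivity
    obtain ⟨L, hL0, hL⟩ := h.almostInv_T hK h0 hε'0
    obtain ⟨n₀, hn₀⟩ := exists_nat_gt (max (2 * (w₁ * (3 * B) + c)) (2 * w₁ * L))
    refine ⟨n₀, fun n hn => ?_⟩
    set N : ℝ := n + 1 with hN
    have hN1 : 1 ≤ N := by simp [hN]
    have hN0 : 0 < N := by linarith
    have hnn : (n₀ : ℝ) ≤ n := by exact_mod_cast hn
    have hNa : 2 * (w₁ * (3 * B) + c) ≤ N := by linarith [le_max_left (2 * (w₁ * (3 * B) + c)) (2 * w₁ * L)]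
    have hNb : 2 * w₁ * L ≤ N := by linarith [le_max_right (2 * (w₁ * (3 * B) + c)) (2 * w₁ * L)]
    set b := 2 * w₁ * ε' / N ^ 2 with hb
    have hb0 : 0 ≤ b := by positivity
    have hpt : ∀ x ∉ K, |χ n (extT K T x) - χ n x| ≤
        (Metric.closedBall (0 : ℝ × ℝ) (C * N)).indicator (fun _ => b) x := by
      intro x hx
      rw [extT_of_notMem hx]
      obtain ⟨θ, l, hθ, hl, hxe, hgx, hTx⟩ := hco x hx
      obtain ⟨θ', l', -, hl', hxe', hgx', -⟩ := hco (T x) (hT x hx).1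
      have he : m θ + l • uVec θ = m θ' - l' • uVec θ' := hTx.symm.trans hxe'
      have hd := abs_le.1 (abs_sub_le hB0 hB hl hl' he)
      by_cases hxn : ‖x‖ ≤ C * N
      · rw [indicator_of_mem (by simpa using hxn)]
        by_cases hlN : l < N / (2 * w₁)
        · -- close to `K` both values of the cutoff are `1`
          have h1 : l * (2 * w₁) < N := (lt_div_iff₀ (by positivity)).1 hlN
          have h2 := hup θ l hl
          have h3 := hup θ' l' hl'
          have h4 : w₁ * l' ≤ w₁ * (l + 3 * B) := mul_le_mul_of_nonneg_left (by linarith) hw1.le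
          have h5 : 0 ≤ w₁ * (3 * B) := by positivity
          have e1 : χ n x = 1 := profile_of_le (by rw [div_le_one hN0, hgx]; linarith)
          have e2 : χ n (T x) = 1 := profile_of_le (by rw [div_le_one hN0, hgx']; linarith)
          rw [e1, e2]; simpa using hb0
        · push Not at hlN
          have hlL : L ≤ l := by
            refine le_trans ?_ hlN
            rw [le_div_iff₀ (by positivity)]; linarith
          have h1 := hL θ hθ θ' l l' hlL hl' he
          have h2 : ε' / l ≤ ε' / (N / (2 * w₁)) := by gcongr
          calc |χ n (T x) - χ n x| ≤ |g (T x) / N - g x / N| := abs_profile_sub_le _ _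
            _ = |g (T x) - g x| / N := by rw [← sub_div, abs_div, abs_of_pos hN0]
            _ ≤ (ε' / (N / (2 * w₁))) / N := by
                rw [hgx, hgx']; gcongr; exact h1.trans h2
            _ = b := by rw [hb]; field_simp
      · push Not at hxn
        rw [indicator_of_notMem (by simpa using hxn), hχfar n x hx hxn]
        have h1 := hnorm θ l hl
        rw [← hxe] at h1
        have h2 := hlow θ' l' hl'
        have h3 := hfar N hN1 l (by linarith)
        have h4 : w₀ * (l - 3 * B) ≤ w₀ * l' := mul_le_mul_of_nonneg_left (by linarith) hw0.le
        have e2 : χ n (T x) = 0 := profile_of_ge (by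
          rw [le_div_iff₀ hN0, hgx']; linarith)
        rw [e2]; simp
    have hle : ∫ x in Kᶜ, |χ n (extT K T x) - χ n x| ≤ b * (2 * (C * N)) ^ 2 := by
      calc ∫ x in Kᶜ, |χ n (extT K T x) - χ n x|
          ≤ ∫ x in Kᶜ, (Metric.closedBall (0 : ℝ × ℝ) (C * N)).indicator (fun _ => b) x := by
            refine integral_mono_of_nonneg (ae_of_all _ fun x => abs_nonneg _) (hball _ _) ?_
            filter_upwards [ae_restrict_mem hK.isClosed.measurableSet.compl] with x hx
            exact hpt x hx
        _ ≤ ∫ x, (Metric.closedBall (0 : ℝ × ℝ) (C * N)).indicator (fun _ => b) x := by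
            refine setIntegral_le_integral ?_ (ae_of_all _ fun x => indicator_nonneg (fun _ _ => hb0) _)
            exact (integrableOn_const (isCompact_closedBall (0 : ℝ × ℝ) _).measure_lt_top.ne
              ).integrable_indicator Metric.isClosed_closedBall.measurableSet
        _ = b * (2 * (C * N)) ^ 2 := by
            rw [integral_indicator_const _ Metric.isClosed_closedBall.measurableSet,
              volume_real_closedBall_plane (by positivity), smul_eq_mul, mul_comm]
    have hval : b * (2 * (C * N)) ^ 2 = ε / 2 := by
      rw [hb, hε']; field_simp; ring
    rw [Real.dist_eq, sub_zero, abs_of_nonneg (integral_nonneg fun x => abs_nonneg _)]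
    linarith

end TangentParam

/-! ### Second variation and periodicity of the generating function -/

/-- The domain of the generating function. -/
def genDom : Set (ℝ × ℝ) := {p : ℝ × ℝ | p.1 < p.2 ∧ p.2 < p.1 + π}

theorem isOpen_genDom : IsOpen genDom :=
  (isOpen_lt continuous_fst continuous_snd).inter
    (isOpen_lt continuous_snd (continuous_fst.add continuous_const))

/-- Second order necessary condition at a local minimum. -/
theorem nonneg_of_isLocalMin {G d : ℝ → ℝ} {c : ℝ} (hmin : IsLocalMin G 0)
    (hG : ∀ᶠ t in nhds 0, HasDerivAt G (d t) t) (hd : HasDerivAt d c 0) : 0 ≤ c := by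
  by_contra! hc
  have e1 : deriv (-G) =ᶠ[nhds 0] fun t => -d t := by
    filter_upwards [hG] with t ht
    exact ht.neg.deriv
  have e0 : d 0 = 0 := hmin.hasDerivAt_eq_zero hG.self_of_nhds
  have h1 : IsLocalMin (-G) 0 := by
    refine isLocalMin_of_deriv_deriv_pos ?_ ?_ hG.self_of_nhds.continuousAt.neg
    · rw [e1.deriv_eq, hd.fun_neg.deriv]; linarith
    · rw [e1.self_of_nhds]; simp [e0]
  have h2 : G =ᶠ[nhds 0] fun _ => G 0 := by
    filter_upwards [hmin, h1] with t a b
    simp only [Pi.neg_apply] at b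
    linarith
  have h3 : d =ᶠ[nhds 0] fun _ => 0 := by
    filter_upwards [h2.eventuallyEq_nhds, hG] with t a b
    have := a.deriv_eq
    rw [b.deriv, deriv_const] at this
    exact this
  have h4 := h3.deriv_eq
  rw [hd.deriv, deriv_const] at h4
  exact hc.ne h4

section GenFun

variable {S : ℝ → ℝ → ℝ}

/-- The Hessian of the generating function, as a bilinear map. -/
def hessS (S : ℝ → ℝ → ℝ) : ℝ × ℝ → (ℝ × ℝ →L[ℝ] ℝ × ℝ →L[ℝ] ℝ) :=
  fderiv ℝ (fderiv ℝ fun p : ℝ × ℝ => S p.1 p.2)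

theorem hasFDerivAt_S (hS2 : ContDiffOn ℝ 2 (fun p : ℝ × ℝ => S p.1 p.2) genDom) {p : ℝ × ℝ}
    (hp : p ∈ genDom) :
    HasFDerivAt (fun p : ℝ × ℝ => S p.1 p.2) (fderiv ℝ (fun p : ℝ × ℝ => S p.1 p.2) p) p :=
  ((hS2.contDiffAt (isOpen_genDom.mem_nhds hp)).differentiableAt (by norm_num)).hasFDerivAt

theorem hasFDerivAt_fderiv_S (hS2 : ContDiffOn ℝ 2 (fun p : ℝ × ℝ => S p.1 p.2) genDom) {p : ℝ × ℝ}
    (hp : p ∈ genDom) :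
    HasFDerivAt (fderiv ℝ fun p : ℝ × ℝ => S p.1 p.2) (hessS S p) p :=
  (((hS2.contDiffAt (isOpen_genDom.mem_nhds hp)).fderiv_right (m := 1) (by norm_num)).differentiableAt
    (by norm_num)).hasFDerivAt

theorem continuousOn_hessS (hS2 : ContDiffOn ℝ 2 (fun p : ℝ × ℝ => S p.1 p.2) genDom) :
    ContinuousOn (hessS S) genDom :=
  ((hS2.fderiv_of_isOpen isOpen_genDom (m := 1) (by norm_num)).continuousOn_fderiv_of_isOpen
    isOpen_genDom le_rfl)

theorem eventually_genDom {γ : ℝ → ℝ × ℝ} {t : ℝ} (hγ : ContinuousAt γ t) (h : γ t ∈ genDom) :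
    ∀ᶠ s in nhds t, γ s ∈ genDom := hγ (isOpen_genDom.mem_nhds h)

/-- First derivative of `S` along a line. -/
theorem hasDerivAt_S_line (hS2 : ContDiffOn ℝ 2 (fun p : ℝ × ℝ => S p.1 p.2) genDom) (p v : ℝ × ℝ)
    {t : ℝ} (h : p + t • v ∈ genDom) :
    HasDerivAt (fun t : ℝ => S (p.1 + t * v.1) (p.2 + t * v.2))
      (fderiv ℝ (fun p : ℝ × ℝ => S p.1 p.2) (p + t • v) v) t := by
  have hl : HasDerivAt (fun t : ℝ => p + t • v) v t := by
    simpa using ((hasDerivAt_id t).smul_const v).const_add p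
  exact (hasFDerivAt_S hS2 h).comp_hasDerivAt t hl

/-- Second derivative of `S` along a line. -/
theorem hasDerivAt_fderiv_S_line (hS2 : ContDiffOn ℝ 2 (fun p : ℝ × ℝ => S p.1 p.2) genDom)
    (p v w : ℝ × ℝ) {t : ℝ} (h : p + t • v ∈ genDom) :
    HasDerivAt (fun t : ℝ => fderiv ℝ (fun p : ℝ × ℝ => S p.1 p.2) (p + t • v) w)
      (hessS S (p + t • v) v w) t := by
  have hl : HasDerivAt (fun t : ℝ => p + t • v) v t := by
    simpa using ((hasDerivAt_id t).smul_const v).const_add p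
  have := (hasFDerivAt_fderiv_S hS2 h).comp_hasDerivAt t hl
  exact this.clm_apply (hasDerivAt_const t w) |>.congr_deriv (by simp)

theorem S11_eq (hS2 : ContDiffOn ℝ 2 (fun p : ℝ × ℝ => S p.1 p.2) genDom) {a b : ℝ}
    (h : (a, b) ∈ genDom) : S11 S a b = hessS S (a, b) (1, 0) (1, 0) := by
  have key : ∀ x : ℝ, ((0 : ℝ), b) + x • ((1 : ℝ), (0 : ℝ)) = (x, b) := fun x => by simp
  have e : (fun a' => deriv (fun a'' => S a'' b) a') =ᶠ[nhds a]
      fun a' => fderiv ℝ (fun p : ℝ × ℝ => S p.1 p.2) ((0, b) + a' • (1, 0)) (1, 0) := by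
    have := eventually_genDom (γ := fun x => (x, b)) (t := a) (by fun_prop) h
    filter_upwards [this] with x hx
    have := hasDerivAt_S_line hS2 (0, b) (1, 0) (t := x) (by rwa [key])
    simpa using this.deriv
  rw [S11, e.deriv_eq, (hasDerivAt_fderiv_S_line hS2 _ _ _ (by rwa [key])).deriv, key]

theorem S22_eq (hS2 : ContDiffOn ℝ 2 (fun p : ℝ × ℝ => S p.1 p.2) genDom) {a b : ℝ}
    (h : (a, b) ∈ genDom) : S22 S a b = hessS S (a, b) (0, 1) (0, 1) := by
  have key : ∀ x : ℝ, (a, (0 : ℝ)) + x • ((0 : ℝ), (1 : ℝ)) = (a, x) := fun x => by simp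
  have e : (fun b' => deriv (fun b'' => S a b'') b') =ᶠ[nhds b]
      fun b' => fderiv ℝ (fun p : ℝ × ℝ => S p.1 p.2) ((a, 0) + b' • (0, 1)) (0, 1) := by
    have := eventually_genDom (γ := fun x => (a, x)) (t := b) (by fun_prop) h
    filter_upwards [this] with x hx
    have := hasDerivAt_S_line hS2 (a, 0) (0, 1) (t := x) (by rwa [key])
    simpa using this.deriv
  rw [S22, e.deriv_eq, (hasDerivAt_fderiv_S_line hS2 _ _ _ (by rwa [key])).deriv, key]

theorem S12_eq (hS2 : ContDiffOn ℝ 2 (fun p : ℝ × ℝ => S p.1 p.2) genDom) {a b : ℝ}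
    (h : (a, b) ∈ genDom) : S12 S a b = hessS S (a, b) (1, 0) (0, 1) := by
  have key : ∀ x : ℝ, ((0 : ℝ), b) + x • ((1 : ℝ), (0 : ℝ)) = (x, b) := fun x => by simp
  have key' : ∀ x y : ℝ, (x, (0 : ℝ)) + y • ((0 : ℝ), (1 : ℝ)) = (x, y) := fun x y => by simp
  have e : (fun a' => deriv (fun b' => S a' b') b) =ᶠ[nhds a]
      fun a' => fderiv ℝ (fun p : ℝ × ℝ => S p.1 p.2) ((0, b) + a' • (1, 0)) (0, 1) := by
    have := eventually_genDom (γ := fun x => (x, b)) (t := a) (by fun_prop) h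
    filter_upwards [this] with x hx
    have := hasDerivAt_S_line hS2 (x, 0) (0, 1) (t := b) (by rwa [key'])
    rw [key' x b] at this
    rw [key x]
    simpa using this.deriv
  rw [S12, e.deriv_eq, (hasDerivAt_fderiv_S_line hS2 _ _ _ (by rwa [key])).deriv, key]

/-- The second derivative of `S` at `(a, b)` in the direction `(ξ, η)`. -/
def quadS (S : ℝ → ℝ → ℝ) (a b ξ η : ℝ) : ℝ :=
  ξ ^ 2 * S11 S a b + 2 * ξ * η * S12 S a b + η ^ 2 * S22 S a b

theorem hessS_self (hS2 : ContDiffOn ℝ 2 (fun p : ℝ × ℝ => S p.1 p.2) genDom) {a b : ℝ}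
    (h : (a, b) ∈ genDom) (ξ η : ℝ) : hessS S (a, b) (ξ, η) (ξ, η) = quadS S a b ξ η := by
  have hsymm : hessS S (a, b) (0, 1) (1, 0) = hessS S (a, b) (1, 0) (0, 1) :=
    ((hS2.contDiffAt (isOpen_genDom.mem_nhds h)).isSymmSndFDerivAt (by simp)) (0, 1) (1, 0)
  have hv : ((ξ, η) : ℝ × ℝ) = ξ • ((1 : ℝ), (0 : ℝ)) + η • ((0 : ℝ), (1 : ℝ)) := by simp
  rw [quadS, S11_eq hS2 h, S12_eq hS2 h, S22_eq hS2 h, hv]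
  simp only [map_add, map_smul, add_apply, smul_apply,
    hsymm, smul_eq_mul]
  ring

/-- Along a line, `S` has a derivative near `t = 0`, whose derivative at `0` is the quadratic form
of second partial derivatives. -/
theorem exists_second_deriv (hS2 : ContDiffOn ℝ 2 (fun p : ℝ × ℝ => S p.1 p.2) genDom) {a b : ℝ}
    (h : (a, b) ∈ genDom) (ξ η : ℝ) :
    ∃ d : ℝ → ℝ, (∀ᶠ t in nhds 0, HasDerivAt (fun t => S (a + t * ξ) (b + t * η)) (d t) t) ∧
      HasDerivAt d (quadS S a b ξ η) 0 := by
  refine ⟨fun t => fderiv ℝ (fun p : ℝ × ℝ => S p.1 p.2) ((a, b) + t • (ξ, η)) (ξ, η), ?_, ?_⟩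
  · have := eventually_genDom (γ := fun t : ℝ => (a, b) + t • ((ξ, η) : ℝ × ℝ)) (t := 0)
      (by fun_prop) (by simpa using h)
    filter_upwards [this] with t ht
    exact hasDerivAt_S_line hS2 (a, b) (ξ, η) ht
  · have := hasDerivAt_fderiv_S_line hS2 (a, b) (ξ, η) (ξ, η) (t := 0) (by simpa using h)
    rw [zero_smul, add_zero, hessS_self hS2 h] at this
    exact this

/-- The second variation of a truncated locally minimizing configuration is nonnegative. -/
theorem second_variation_nonneg (hS2 : ContDiffOn ℝ 2 (fun p : ℝ × ℝ => S p.1 p.2) genDom)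
    {φ : ℤ → ℝ} (hφ : ∀ n, (φ n, φ (n + 1)) ∈ genDom) (hmin : LocMinConfig S φ) (a : ℤ → ℝ)
    (N : ℤ) (hN : 0 ≤ N) :
    0 ≤ a 0 ^ 2 * S22 S (φ (-1)) (φ 0) +
      (∑ i ∈ Finset.Icc 0 (N - 1), quadS S (φ i) (φ (i + 1)) (a i) (a (i + 1))) +
      a N ^ 2 * S11 S (φ N) (φ (N + 1)) := by
  have hm := hmin 0 N hN
  have hcont : ContinuousAt (fun t : ℝ => fun n : ℤ => φ n + t * a n) 0 := by fun_prop
  have h0 : (fun n : ℤ => φ n + (0 : ℝ) * a n) = φ := by ext; simp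
  have hm' : IsLocalMin (fun t : ℝ => S (φ (0 - 1)) (φ 0 + t * a 0) +
      (∑ i ∈ Finset.Icc 0 (N - 1), S (φ i + t * a i) (φ (i + 1) + t * a (i + 1))) +
        S (φ N + t * a N) (φ (N + 1))) 0 := by
    have ht : Filter.Tendsto (fun t : ℝ => fun n : ℤ => φ n + t * a n) (nhds 0) (nhds φ) := by
      have := hcont.tendsto
      rwa [h0] at this
    filter_upwards [ht.eventually hm] with t h
    simpa using h
  have hφ' : (φ (0 - 1), φ 0) ∈ genDom := by simpa using hφ (-1)
  obtain ⟨d₁, h1, h1'⟩ := exists_second_deriv hS2 hφ' 0 (a 0)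
  obtain ⟨d₂, h2, h2'⟩ := exists_second_deriv hS2 (hφ N) (a N) 0
  choose d h3 h3' using fun i => exists_second_deriv hS2 (hφ i) (a i) (a (i + 1))
  have key := nonneg_of_isLocalMin
    (d := fun t => d₁ t + (∑ i ∈ Finset.Icc 0 (N - 1), d i t) + d₂ t) hm' ?_
    ((h1'.add (HasDerivAt.fun_sum fun i _ => h3' i)).add h2')
  · simp only [quadS] at key ⊢
    simpa using key
  · have h4 : ∀ᶠ t in nhds 0, ∀ i ∈ Finset.Icc 0 (N - 1), HasDerivAt
        (fun t => S (φ i + t * a i) (φ (i + 1) + t * a (i + 1))) (d i t) t :=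
      (Filter.eventually_all_finset _).2 fun i _ => h3 i
    filter_upwards [h1, h2, h4] with t t1 t2 t4
    simp only [mul_zero, add_zero] at t1 t2
    exact (t1.add (HasDerivAt.fun_sum t4)).add t2

/-- A function invariant under a translation has a translation-invariant derivative. -/
theorem fderiv_add_eq {F : Type*} [NormedAddCommGroup F] [NormedSpace ℝ F] {f : ℝ × ℝ → F}
    {U : Set (ℝ × ℝ)} (hU : IsOpen U) {w : ℝ × ℝ} (hf : ∀ p ∈ U, f (p + w) = f p) {p : ℝ × ℝ}
    (hp : p ∈ U) : fderiv ℝ f (p + w) = fderiv ℝ f p := by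
  have e : (fun x => f (x + w)) =ᶠ[nhds p] f := by
    filter_upwards [hU.mem_nhds hp] with x hx using hf x hx
  rw [← e.fderiv_eq, fderiv_comp_add_right]

/-- The Hessian of `S` inherits the translation invariance of `S`. -/
theorem hessS_add {w : ℝ × ℝ} (hf : ∀ p ∈ genDom, S (p + w).1 (p + w).2 = S p.1 p.2) {p : ℝ × ℝ}
    (hp : p ∈ genDom) : hessS S (p + w) = hessS S p :=
  fderiv_add_eq isOpen_genDom (fun _ hq => fderiv_add_eq (f := fun p : ℝ × ℝ => S p.1 p.2)
    isOpen_genDom hf hq) hp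

end GenFun

section Periodicity

variable {K : Set (ℝ × ℝ)}

/-- The set `K` lies on the side of the line through a tangent segment containing the origin.
Otherwise the line would meet the interior of `K`, and by convexity the segment would meet `K` in
points other than its midpoint. -/
theorem SegData.support (hconv : Convex ℝ K) (h0 : (0 : ℝ × ℝ) ∈ interior K) {a b : ℝ}
    {M₀ M₁ : ℝ × ℝ} (h : SegData K a b M₀ M₁) (hpos : 0 < detV M₀ M₁) {k : ℝ × ℝ} (hk : k ∈ K) :
    0 ≤ detV (M₁ - M₀) (k - M₀) := by
  by_contra! hneg
  obtain ⟨-, -, hfr, hseg⟩ := h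
  set D := detV M₀ M₁ with hD
  set ψ := detV (M₁ - M₀) (k - M₀) with hψ
  -- the point of the segment from the origin to `k` on the line through `M₀` and `M₁`
  set t := D / (D - ψ) with ht
  have hDψ : 0 < D - ψ := by linarith
  have ht0 : 0 < t := by positivity
  have ht1 : t < 1 := by rw [ht, div_lt_one hDψ]; linarith
  have hz : t • k ∈ interior K := by
    have := hconv.combo_interior_self_mem_interior h0 hk (a := 1 - t) (b := t) (by linarith)
      ht0.le (by ring)
    simpa using this
  have htD : t * (D - ψ) = D := by rw [ht]; field_simp
  obtain ⟨M, hM⟩ : ∃ M, M = (1 / 2 : ℝ) • (M₀ + M₁) := ⟨_, rfl⟩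
  rw [← hM] at hfr hseg
  have hMK : M ∈ K := by
    have : M ∈ segment ℝ M₀ M₁ ∩ K := by rw [hseg]; rfl
    exact this.2
  obtain ⟨x₀, y₀⟩ := M₀
  obtain ⟨x₁, y₁⟩ := M₁
  obtain ⟨k₁, k₂⟩ := k
  simp only [detV, Prod.mk_sub_mk] at hD hψ
  have hDne : (x₁ - x₀) ^ 2 + (y₁ - y₀) ^ 2 > 0 := by
    by_contra! hc
    have e1 : x₁ - x₀ = 0 := by nlinarith [sq_nonneg (x₁ - x₀), sq_nonneg (y₁ - y₀)]
    have e2 : y₁ - y₀ = 0 := by nlinarith [sq_nonneg (x₁ - x₀), sq_nonneg (y₁ - y₀)]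
    have : D = x₀ * (y₁ - y₀) - y₀ * (x₁ - x₀) := by rw [hD]; ring
    rw [e1, e2] at this
    linarith
  have hlin : (x₁ - x₀) * (t * k₂ - y₀) - (y₁ - y₀) * (t * k₁ - x₀) = 0 := by
    have : t * (D - ψ) = D := htD
    rw [hD, hψ] at this
    linarith
  set n2 := (x₁ - x₀) ^ 2 + (y₁ - y₀) ^ 2 with hn2
  -- the coordinate of `t • k` along the line, measured from the midpoint
  set τ := ((x₁ - x₀) * (t * k₁ - (x₀ + x₁) / 2) + (y₁ - y₀) * (t * k₂ - (y₀ + y₁) / 2)) / n2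
    with hτ
  have hτn : τ * n2 = (x₁ - x₀) * (t * k₁ - (x₀ + x₁) / 2) +
      (y₁ - y₀) * (t * k₂ - (y₀ + y₁) / 2) := by rw [hτ]; field_simp
  have e1 : t * k₁ = (x₀ + x₁) / 2 + τ * (x₁ - x₀) := by
    have : n2 * (t * k₁) = n2 * ((x₀ + x₁) / 2 + τ * (x₁ - x₀)) := by
      have e : n2 * ((x₀ + x₁) / 2 + τ * (x₁ - x₀)) =
        n2 * ((x₀ + x₁) / 2) + (x₁ - x₀) * (τ * n2) := by ring
      rw [e, hτn, hn2]
      linear_combination -(y₁ - y₀) * hlin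
    exact mul_left_cancel₀ hDne.ne' this
  have e2 : t * k₂ = (y₀ + y₁) / 2 + τ * (y₁ - y₀) := by
    have : n2 * (t * k₂) = n2 * ((y₀ + y₁) / 2 + τ * (y₁ - y₀)) := by
      have e : n2 * ((y₀ + y₁) / 2 + τ * (y₁ - y₀)) =
        n2 * ((y₀ + y₁) / 2) + (y₁ - y₀) * (τ * n2) := by ring
      rw [e, hτn, hn2]
      linear_combination (x₁ - x₀) * hlin
    exact mul_left_cancel₀ hDne.ne' this
  -- a point of the segment close to the midpoint in the direction of `t • k`
  set s := 1 / (2 * (1 + |τ|)) with hs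
  have hs0 : 0 < s := by positivity
  have hsτ : |s * τ| ≤ 1 / 2 := by
    rw [abs_mul, abs_of_pos hs0, hs, div_mul_eq_mul_div, one_mul, div_le_div_iff₀ (by positivity)
      (by norm_num)]
    nlinarith [abs_nonneg τ]
  have hs1 : s ≤ 1 := by
    rw [hs, div_le_one (by positivity)]
    nlinarith [abs_nonneg τ]
  have hab := abs_le.1 hsτ
  have hmem : (1 - s) • M + s • (t • ((k₁, k₂) : ℝ × ℝ)) ∈ segment ℝ (x₀, y₀) (x₁, y₁) ∩ K := by
    refine ⟨⟨1 / 2 - s * τ, 1 / 2 + s * τ, by linarith, by linarith, by ring, ?_⟩,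
      hconv hMK (interior_subset hz) (by linarith) hs0.le (by ring)⟩
    rw [hM]
    ext
    · simp only [Prod.smul_mk, smul_eq_mul, Prod.mk_add_mk, e1]; ring
    · simp only [Prod.smul_mk, smul_eq_mul, Prod.mk_add_mk, e2]; ring
  rw [hseg, mem_singleton_iff] at hmem
  have hzM : t • ((k₁, k₂) : ℝ × ℝ) = M := by
    have : s • (t • ((k₁, k₂) : ℝ × ℝ)) = s • M := by
      rw [sub_smul, one_smul] at hmem
      generalize s • (t • ((k₁, k₂) : ℝ × ℝ)) = z at hmem ⊢
      have : z = M - s • M + z - M + s • M := by abel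
      rw [this, hmem]
      abel
    exact smul_right_injective _ hs0.ne' this
  rw [hzM] at hz
  exact hfr.2 hz

/-- The area cut off by a tangent segment bisected by its point of tangency depends only on the
two rays: each of the two midpoints lies beyond the line of the other segment, and the inequality of
the arithmetic and geometric means forces the segments to coincide. -/
theorem SegData.detV_eq (hcl : IsClosed K) (hconv : Convex ℝ K) (h0 : (0 : ℝ × ℝ) ∈ interior K)
    {a b : ℝ}
    (hab : (a, b) ∈ genDom) {M₀ M₁ N₀ N₁ : ℝ × ℝ} (hM : SegData K a b M₀ M₁)
    (hN : SegData K a b N₀ N₁) : detV M₀ M₁ = detV N₀ N₁ := by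
  obtain ⟨s₀, hs₀, rfl⟩ := hM.1
  obtain ⟨s₁, hs₁, rfl⟩ := hM.2.1
  obtain ⟨t₀, ht₀, rfl⟩ := hN.1
  obtain ⟨t₁, ht₁, rfl⟩ := hN.2.1
  have hsin : 0 < detV (uVec a) (uVec b) := by
    rw [detV_uVec]
    exact sin_pos_of_pos_of_lt_pi (by linarith [hab.1]) (by linarith [hab.2])
  have hsc : ∀ x y : ℝ, detV (x • uVec a) (y • uVec b) = x * y * detV (uVec a) (uVec b) :=
    fun x y => by simp only [detV, Prod.smul_fst, Prod.smul_snd, smul_eq_mul]; ring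
  have h1 := hM.support hconv h0 (by rw [hsc]; positivity) (hcl.frontier_subset hN.2.2.1)
  have h2 := hN.support hconv h0 (by rw [hsc]; positivity) (hcl.frontier_subset hM.2.2.1)
  have id : ∀ x₀ x₁ y₀ y₁ : ℝ, detV (x₁ • uVec b - x₀ • uVec a)
      ((1 / 2 : ℝ) • (y₀ • uVec a + y₁ • uVec b) - x₀ • uVec a) =
      (x₀ * x₁ - (y₀ * x₁ + x₀ * y₁) / 2) * detV (uVec a) (uVec b) := by
    intro x₀ x₁ y₀ y₁
    simp only [detV, Prod.smul_fst, Prod.smul_snd, smul_eq_mul, Prod.fst_sub, Prod.snd_sub,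
      Prod.fst_add, Prod.snd_add]
    ring
  rw [id] at h1 h2
  have h1' := nonneg_of_mul_nonneg_left h1 hsin
  have h2' := nonneg_of_mul_nonneg_left h2 hsin
  rw [hsc, hsc]
  congr 1
  -- with `X = s₀ s₁` and `Y = t₀ t₁`, both are at least `√(XY)` by the two inequalities
  have e1 : (t₀ * s₁ + s₀ * t₁) ^ 2 ≤ 4 * (s₀ * s₁) * (t₀ * t₁) := by
    have hp : 0 < t₀ * s₁ + s₀ * t₁ := by positivity
    nlinarith [mul_nonneg h1' h2', mul_pos hs₀ hs₁, mul_pos ht₀ ht₁,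
      mul_nonneg h1' hp.le, mul_nonneg h2' hp.le]
  have e2 : t₀ * s₁ = s₀ * t₁ := by nlinarith [sq_nonneg (t₀ * s₁ - s₀ * t₁)]
  have e3 : s₀ * s₁ ≥ t₀ * s₁ := by linarith
  have e4 : t₀ * t₁ ≥ s₀ * t₁ := by linarith
  have e5 : s₀ ≥ t₀ := le_of_mul_le_mul_right e3 hs₁
  have e6 : t₀ ≥ s₀ := le_of_mul_le_mul_right e4 ht₁
  have e7 : s₀ = t₀ := le_antisymm e6 e5
  subst e7
  have e8 := mul_left_cancel₀ hs₀.ne' e2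
  rw [e8]

theorem uVec_add_int_mul (a : ℝ) (k : ℤ) : uVec (a + k * (2 * π)) = uVec a := by
  simp [uVec, Real.cos_add_int_mul_two_pi, Real.sin_add_int_mul_two_pi]

/-- `S` is only given through some bisected tangent segment for each pair of angles, so its periodicity
rests on the uniqueness of the area in `SegData.detV_eq`. -/
theorem genFun_periodic {S : ℝ → ℝ → ℝ} (hS : IsGenFun K S) (hcl : IsClosed K)
    (hconv : Convex ℝ K) (h0 : (0 : ℝ × ℝ) ∈ interior K) {a b : ℝ} (hab : (a, b) ∈ genDom)
    (k : ℤ) : S (a + k * (2 * π)) (b + k * (2 * π)) = S a b := by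
  obtain ⟨M₀, M₁, hM, e⟩ := hS a b hab.1 hab.2
  obtain ⟨N₀, N₁, hN, e'⟩ := hS (a + k * (2 * π)) (b + k * (2 * π)) (by linarith [hab.1])
    (by linarith [hab.2])
  rw [SegData, uVec_add_int_mul, uVec_add_int_mul] at hN
  rw [e, e', SegData.detV_eq hcl hconv h0 hab hM hN]

/-- The second derivatives of the generating function are invariant under adding a common multiple
of `2π` to both angles. -/
theorem genFun_second_periodic {S : ℝ → ℝ → ℝ} (hS : IsGenFun K S) (hcl : IsClosed K)
    (hconv : Convex ℝ K) (h0 : (0 : ℝ × ℝ) ∈ interior K)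
    (hS2 : ContDiffOn ℝ 2 (fun p : ℝ × ℝ => S p.1 p.2) genDom) {a b : ℝ}
    (hab : (a, b) ∈ genDom) {a' b' : ℝ} (k : ℤ) (ha : a' = a + k * (2 * π))
    (hb : b' = b + k * (2 * π)) :
    S11 S a' b' = S11 S a b ∧ S12 S a' b' = S12 S a b ∧ S22 S a' b' = S22 S a b := by
  subst ha hb
  have h' : (a + k * (2 * π), b + k * (2 * π)) ∈ genDom :=
    ⟨by linarith [hab.1], by linarith [hab.2]⟩
  have e := hessS_add (S := S) (w := (k * (2 * π), k * (2 * π)))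
    (fun p hp => genFun_periodic hS hcl hconv h0 (a := p.1) (b := p.2) hp k) hab
  simp only [Prod.mk_add_mk] at e
  rw [S11_eq hS2 h', S12_eq hS2 h', S22_eq hS2 h', S11_eq hS2 hab, S12_eq hS2 hab,
    S22_eq hS2 hab, e]
  exact ⟨rfl, rfl, rfl⟩

end Periodicity

/-! ### Orbits and measurability of angles -/

section Orbits

variable {K : Set (ℝ × ℝ)} {T : ℝ × ℝ → ℝ × ℝ} {φ₀ φ₁ : ℝ × ℝ → ℝ}

/-- The lift of the outer billiard map to pairs of a point and an angle, where the angle advances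
by the angle `φ₁ - φ₀` between a point and its image. -/
def liftPerm (hT : BijOn T Kᶜ Kᶜ) (φ₀ φ₁ : ℝ × ℝ → ℝ) :
    Equiv.Perm ((Kᶜ : Set (ℝ × ℝ)) × ℝ) where
  toFun z := (hT.equiv T z.1, z.2 + (φ₁ z.1 - φ₀ z.1))
  invFun z := ((hT.equiv T).symm z.1,
    z.2 - (φ₁ ((hT.equiv T).symm z.1) - φ₀ ((hT.equiv T).symm z.1)))
  left_inv z := by simp
  right_inv z := by simp

/-- Every point outside `K` lies on a two-sided orbit, which admits a polar lift consisting of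
the given angles up to multiples of `2π`. -/
theorem exists_orbit (hT : BijOn T Kᶜ Kᶜ)
    (hangles : ∀ x ∉ K, (∃ ρ > (0 : ℝ), x = ρ • uVec (φ₀ x)) ∧
      (∃ ρ > (0 : ℝ), T x = ρ • uVec (φ₁ x)) ∧ φ₀ x < φ₁ x ∧ φ₁ x < φ₀ x + π)
    {x : ℝ × ℝ} (hx : x ∉ K) :
    ∃ (X : ℤ → ℝ × ℝ) (φ : ℤ → ℝ), X 0 = x ∧ (∀ n, X n ∉ K) ∧ (∀ n, X (n + 1) = T (X n)) ∧
      IsPolarLift X φ ∧ ∀ n, ∃ k : ℤ, φ n = φ₀ (X n) + k * (2 * π) ∧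
        φ (n + 1) = φ₁ (X n) + k * (2 * π) := by
  set P := liftPerm hT φ₀ φ₁ with hP
  set z : ℤ → (Kᶜ : Set (ℝ × ℝ)) × ℝ := fun n => (P ^ n) (⟨x, hx⟩, φ₀ x) with hz
  have hstep : ∀ n, z (n + 1) = P (z n) := fun n => by
    simp only [hz, add_comm n 1, zpow_add, zpow_one, Equiv.Perm.mul_apply]
  have hz1 : ∀ n, ((z (n + 1)).1 : ℝ × ℝ) = T (z n).1 := fun n => by rw [hstep]; rfl
  have hz2 : ∀ n, (z (n + 1)).2 = (z n).2 + (φ₁ (z n).1 - φ₀ (z n).1) := fun n => by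
    rw [hstep]; rfl
  have hiff : ∀ n, (∃ k : ℤ, (z n).2 = φ₀ (z n).1 + k * (2 * π)) ↔
      ∃ k : ℤ, (z (n + 1)).2 = φ₀ (z (n + 1)).1 + k * (2 * π) := by
    intro n
    obtain ⟨s, hs, h1⟩ := (hangles _ (z n).1.2).2.1
    obtain ⟨t, ht, h2⟩ := (hangles _ (z (n + 1)).1.2).1
    rw [← hz1, h2] at h1
    obtain ⟨j, hj⟩ := exists_int_of_smul_uVec ht hs h1
    rw [hz2]
    constructor
    · rintro ⟨k, hk⟩
      exact ⟨k + j, by push_cast; linarith⟩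
    · rintro ⟨k, hk⟩
      exact ⟨k - j, by push_cast; linarith⟩
  have hk : ∀ n, ∃ k : ℤ, (z n).2 = φ₀ (z n).1 + k * (2 * π) := by
    intro n
    induction n using Int.induction_on with
    | zero => exact ⟨0, by simp [hz]⟩
    | succ i ih => exact (hiff _).1 ih
    | pred i ih =>
      rw [hiff]
      simpa only [sub_add_cancel] using ih
  refine ⟨fun n => (z n).1, fun n => (z n).2, by simp [hz], fun n => (z n).1.2, hz1,
    ⟨fun n => ?_, fun n => ?_⟩, fun n => ?_⟩
  · obtain ⟨k, e⟩ := hk n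
    obtain ⟨s, hs, h1⟩ := (hangles _ (z n).1.2).1
    exact ⟨s, hs, by simp only [e, uVec_add_int_mul]; exact h1⟩
  · obtain ⟨-, -, h1, h2⟩ := hangles _ (z n).1.2
    simp only [hz2]
    constructor <;> linarith
  · obtain ⟨k, e⟩ := hk n
    exact ⟨k, e, by simp only [hz2]; linarith⟩

end Orbits

section Measurability

variable {K : Set (ℝ × ℝ)} {T : ℝ × ℝ → ℝ × ℝ} {φ₀ φ₁ : ℝ × ℝ → ℝ} {S : ℝ → ℝ → ℝ}

/-- The second derivative `S₁₁` along an orbit is a measurable function of the point, although the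
chosen angles need not be measurable: by periodicity they may be replaced by measurable ones. -/
theorem aemeasurable_S11 (hKc : IsClosed K) (hconv : Convex ℝ K)
    (h0 : (0 : ℝ × ℝ) ∈ interior K) (hS : IsGenFun K S)
    (hS2 : ContDiffOn ℝ 2 (fun p : ℝ × ℝ => S p.1 p.2) genDom)
    (hTm : Measurable (extT K T))
    (hangles : ∀ x ∉ K, (∃ ρ > (0 : ℝ), x = ρ • uVec (φ₀ x)) ∧
      (∃ ρ > (0 : ℝ), T x = ρ • uVec (φ₁ x)) ∧ φ₀ x < φ₁ x ∧ φ₁ x < φ₀ x + π) :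
    AEMeasurable (fun x => S11 S (φ₀ x) (φ₁ x)) (volume.restrict Kᶜ) := by
  classical
  set θ : ℝ × ℝ → ℝ := fun x => Complex.arg (Complex.equivRealProd.symm x) with hθ
  set d : ℝ × ℝ → ℝ := fun x => Complex.arg
    (star (Complex.equivRealProd.symm x) * Complex.equivRealProd.symm (extT K T x)) with hd
  have hem : Measurable (Complex.equivRealProd.symm : ℝ × ℝ → ℂ) :=
    Complex.equivRealProdCLM.symm.continuous.measurable
  have hθm : Measurable θ := Complex.measurable_arg.comp hem
  have hdm : Measurable d :=
    Complex.measurable_arg.comp ((continuous_star.measurable.comp hem).mul (hem.comp hTm))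
  set g : ℝ × ℝ → ℝ := genDom.piecewise (fun p => S11 S p.1 p.2) 0 with hg
  have hgm : Measurable g := by
    refine ContinuousOn.measurable_piecewise ?_ continuousOn_const isOpen_genDom.measurableSet
    have : ContinuousOn (fun p => hessS S p (1, 0) (1, 0)) genDom :=
      ((continuousOn_hessS hS2).clm_apply continuousOn_const).clm_apply continuousOn_const
    exact this.congr fun p hp => S11_eq hS2 hp
  have hm : Measurable fun x => g (θ x, θ x + d x) := hgm.comp (hθm.prodMk (hθm.add hdm))
  refine ⟨_, hm, ?_⟩
  filter_upwards [ae_restrict_mem hKc.isOpen_compl.measurableSet] with x hx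
  obtain ⟨⟨s, hs, h1⟩, ⟨t, ht, h2⟩, h3, h4⟩ := hangles x hx
  have c1 : Complex.equivRealProd.symm x =
      s * (Complex.cos (φ₀ x) + Complex.sin (φ₀ x) * Complex.I) := by
    apply Complex.equivRealProd.injective
    rw [Equiv.apply_symm_apply]
    nth_rewrite 1 [h1]
    ext <;> simp [uVec, ← Complex.ofReal_cos, ← Complex.ofReal_sin]
  have c2 : Complex.equivRealProd.symm (extT K T x) =
      t * (Complex.cos (φ₁ x) + Complex.sin (φ₁ x) * Complex.I) := by
    apply Complex.equivRealProd.injective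
    rw [Equiv.apply_symm_apply, extT_of_notMem hx, h2]
    ext <;> simp [uVec, ← Complex.ofReal_cos, ← Complex.ofReal_sin]
  have hdx : d x = φ₁ x - φ₀ x := by
    have : star (Complex.equivRealProd.symm x) * Complex.equivRealProd.symm (extT K T x) =
        ((s * t : ℝ) : ℂ) * (Complex.cos ((φ₁ x - φ₀ x : ℝ) : ℂ) +
          Complex.sin ((φ₁ x - φ₀ x : ℝ) : ℂ) * Complex.I) := by
      rw [c1, c2, ← Complex.ofReal_cos (φ₁ x - φ₀ x), ← Complex.ofReal_sin (φ₁ x - φ₀ x),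
        Real.cos_sub, Real.sin_sub]
      apply Complex.ext <;>
      · simp [← Complex.ofReal_cos, ← Complex.ofReal_sin]
        ring
    simp only [hd]
    rw [this]
    exact Complex.arg_mul_cos_add_sin_mul_I (by positivity) ⟨by linarith [pi_pos], by linarith⟩
  obtain ⟨k, hk⟩ : ∃ k : ℤ, θ x = φ₀ x + k * (2 * π) := by
    have hz : 0 < ‖Complex.equivRealProd.symm x‖ := by
      rw [norm_pos_iff]
      intro h
      rw [c1] at h
      have h5 := congrArg Complex.re h
      have h6 := congrArg Complex.im h
      simp [← Complex.ofReal_cos, ← Complex.ofReal_sin, hs.ne'] at h5 h6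
      have := Real.cos_sq_add_sin_sq (φ₀ x)
      rw [h5, h6] at this
      norm_num at this
    refine exists_int_of_smul_uVec hs hz (h1.symm.trans ?_)
    ext
    · simp [uVec, hθ, Complex.norm_mul_cos_arg]
    · simp [uVec, hθ, Complex.norm_mul_sin_arg]
  have hab : (φ₀ x, φ₁ x) ∈ genDom := ⟨h3, h4⟩
  have hmem : (θ x, θ x + d x) ∈ genDom :=
    ⟨by simp only [hdx]; linarith, by simp only [hdx]; linarith⟩
  rw [hg, piecewise_eq_of_mem _ _ _ hmem]
  exact (genFun_second_periodic hS hKc hconv h0 hS2 hab k hk (by rw [hdx, hk]; ring)).1.symm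

end Measurability

/-! ### The integral inequality -/

/-- If all orbits of the outer billiard are locally minimizing, then for any
continuous positive weight `A` on `Ω` (and `B = A ∘ T`) the integral
`I = ∫_Ω [A² S₁₁ + 2AB S₁₂ + B² S₂₂] dx` is nonnegative, provided it converges absolutely. -/
theorem outer_billiard_integral_inequality
    (K : Set (ℝ × ℝ)) (hconv : Convex ℝ K) (hcomp : IsCompact K)
    (hint : (interior K).Nonempty)
    (hbd : ∃ r, HasC2PosCurvBoundary K 0 r)
    (T : ℝ × ℝ → ℝ × ℝ) (hT : IsOuterBilliard K T)
    (S : ℝ → ℝ → ℝ) (hS : IsGenFun K S)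
    (hS2 : ContDiffOn ℝ 2 (fun p : ℝ × ℝ => S p.1 p.2) {p : ℝ × ℝ | p.1 < p.2 ∧ p.2 < p.1 + π})
    (hmin : AllOrbitsLocMin K T S)
    (φ₀ φ₁ : ℝ × ℝ → ℝ)
    (hangles : ∀ x ∉ K, (∃ ρ > (0 : ℝ), x = ρ • uVec (φ₀ x)) ∧
      (∃ ρ > (0 : ℝ), T x = ρ • uVec (φ₁ x)) ∧ φ₀ x < φ₁ x ∧ φ₁ x < φ₀ x + π)
    (A : ℝ × ℝ → ℝ) (hA : ContinuousOn A Kᶜ) (hApos : ∀ x ∈ (Kᶜ : Set (ℝ × ℝ)), 0 < A x)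
    (hInt : IntegrableOn (fun x => A x ^ 2 * S11 S (φ₀ x) (φ₁ x)
        + 2 * A x * A (T x) * S12 S (φ₀ x) (φ₁ x)
        + A (T x) ^ 2 * S22 S (φ₀ x) (φ₁ x)) Kᶜ volume) :
    0 ≤ ∫ x in Kᶜ, (A x ^ 2 * S11 S (φ₀ x) (φ₁ x)
        + 2 * A x * A (T x) * S12 S (φ₀ x) (φ₁ x)
        + A (T x) ^ 2 * S22 S (φ₀ x) (φ₁ x)) := by
  obtain ⟨r, hr⟩ := hbd
  have h0 : (0 : ℝ × ℝ) ∈ interior K := hr.1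
  obtain ⟨m, ρ, h⟩ := exists_tangentParam hr
  have hmeas := hcomp.isClosed.isOpen_compl.measurableSet
  have hbij := h.T_bijOn hcomp h0 hT
  obtain ⟨χ, hχm, hχ0, hχ1, hχi, hχl, hχT⟩ := h.exists_cutoff hcomp h0 hT
  have hp : AEMeasurable (fun x => A x ^ 2 * S11 S (φ₀ x) (φ₁ x)) (volume.restrict Kᶜ) :=
    ((hA.aemeasurable hmeas).pow_const 2).mul (aemeasurable_S11 hcomp.isClosed hconv h0 hS hS2
      (h.measurable_extT hcomp h0 hT) hangles)
  -- the boundary term at the left end involves the preimage of `x` under the billiard map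
  set p' : ℝ × ℝ → ℝ := fun x => A x ^ 2 *
    S22 S (φ₀ (Function.invFunOn T Kᶜ x)) (φ₁ (Function.invFunOn T Kᶜ x)) with hp'
  refine integral_nonneg_of_birkhoff_bound (h.measurePreserving_extT hcomp h0 hT) hInt hp
    (p' := p') ?_ hχm hχ0 hχ1 hχi hχl hχT
  filter_upwards [ae_restrict_mem hmeas] with x hx N
  obtain ⟨X, φ, hX0, hXK, hXT, hlift, hφ⟩ := exists_orbit hbij hangles hx
  have hdom : ∀ n, (φ n, φ (n + 1)) ∈ genDom := hlift.2
  have hsec : ∀ n, S11 S (φ n) (φ (n + 1)) = S11 S (φ₀ (X n)) (φ₁ (X n)) ∧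
      S12 S (φ n) (φ (n + 1)) = S12 S (φ₀ (X n)) (φ₁ (X n)) ∧
      S22 S (φ n) (φ (n + 1)) = S22 S (φ₀ (X n)) (φ₁ (X n)) := fun n => by
    obtain ⟨k, e1, e2⟩ := hφ n
    exact genFun_second_periodic hS hcomp.isClosed hconv h0 hS2 (hangles _ (hXK n)).2.2 k e1 e2
  have hiter : ∀ n : ℕ, (extT K T)^[n] x = X n := by
    intro n
    induction n with
    | zero => simpa using hX0.symm
    | succ n ih =>
      rw [Function.iterate_succ_apply', ih, extT_of_notMem (hXK _), ← hXT]
      norm_cast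
  have hinv : Function.invFunOn T Kᶜ x = X (-1) := by
    refine hbij.injOn (Function.invFunOn_mem (hbij.surjOn hx)) (hXK _) ?_
    rw [Function.invFunOn_eq (hbij.surjOn hx), ← hXT]
    simpa using hX0.symm
  have key := second_variation_nonneg hS2 hdom (hmin X hXK hXT φ hlift) (fun n => A (X n)) N
    (by positivity)
  have e22 := (hsec (-1)).2.2
  rw [show (-1 : ℤ) + 1 = 0 by norm_num] at e22
  have hsum : ∑ i ∈ Finset.Icc (0 : ℤ) (N - 1), quadS S (φ i) (φ (i + 1)) (A (X i)) (A (X (i + 1)))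
      = birkhoffSum (extT K T) (fun x => A x ^ 2 * S11 S (φ₀ x) (φ₁ x)
        + 2 * A x * A (T x) * S12 S (φ₀ x) (φ₁ x)
        + A (T x) ^ 2 * S22 S (φ₀ x) (φ₁ x)) N x := by
    rw [birkhoffSum]
    symm
    refine Finset.sum_bij (fun (i : ℕ) _ => (i : ℤ)) ?_ ?_ ?_ ?_
    · intro i hi
      have := Finset.mem_range.1 hi
      exact Finset.mem_Icc.2 (by omega)
    · intro i _ j _ hij
      exact_mod_cast hij
    · intro j hj
      have := Finset.mem_Icc.1 hj
      exact ⟨j.toNat, Finset.mem_range.2 (by omega), by omega⟩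
    · intro i _
      rw [hiter, quadS, (hsec i).1, (hsec i).2.1, (hsec i).2.2, hXT]
  rw [hsum, e22, (hsec N).1, hX0] at key
  rw [hiter, hp']
  simp only [hinv]
  linarith
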